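/- Fix Ω₀ > 0 and δ > 0, let ℓ_ε = δ√ε, let 𝓛 = {p = (mℓ_ε, nℓ_ε) : m, n ∈ ℤ, |p| ≤ 1 − 2√2 ℓ_ε}, and for η > 0 let Λ = B₁ \ ⋃_{p∈𝓛} B(p, ε^η). Identifying ℝ² with ℂ, define g_ε(z) = ∏_{p∈𝓛} (z − p)/|z − p| on Λ, and let A_ε(x) = (Ω₀/(2ε))(−x₂, x₁). Then for every η with 5/2 < η < ∞ there exist a constant C = C(Ω₀, δ, η) independent of ε and ε₀ > 0 such that for all 0 < ε < ε₀, ∫_Λ |(∇ − iA_ε)g_ε|² dx ≤ (π/(2ε²))·(Ω₀/2 − π/δ²)² + C |log ε| / ε. -/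

import Mathlib

open MeasureTheory Real Filter

noncomputable section

/-- Points of the plane. -/
abbrev Pt : Type := EuclideanSpace ℝ (Fin 2)

/-- The open unit disc. -/
def B1 : Set Pt := Metric.ball 0 1

/-- First partial derivative of a complex-valued function. -/
def pd1 (Ψ : Pt → ℂ) (x : Pt) : ℂ := fderiv ℝ Ψ x (EuclideanSpace.single 0 1)

/-- Second partial derivative of a complex-valued function. -/
def pd2 (Ψ : Pt → ℂ) (x : Pt) : ℂ := fderiv ℝ Ψ x (EuclideanSpace.single 1 1)

/-- Angular momentum operator `L = -i (x₁ ∂₂ - x₂ ∂₁)`. -/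
def angMom (Ψ : Pt → ℂ) (x : Pt) : ℂ :=
  -Complex.I * ((x 0 : ℂ) * pd2 Ψ x - (x 1 : ℂ) * pd1 Ψ x)

/-- The Gross-Pitaevskii energy density `|∇Ψ|² - Ω conj(Ψ) LΨ + |Ψ|⁴/ε²`. -/
def gpDensity (ε Ω : ℝ) (Ψ : Pt → ℂ) (x : Pt) : ℝ :=
  ‖pd1 Ψ x‖ ^ 2 + ‖pd2 Ψ x‖ ^ 2
    - Ω * (starRingEnd ℂ (Ψ x) * angMom Ψ x).re
    + ‖Ψ x‖ ^ 4 / ε ^ 2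

/-- The Gross-Pitaevskii functional on the unit disc. -/
def gpEnergy (ε Ω : ℝ) (Ψ : Pt → ℂ) : ℝ := ∫ x in B1, gpDensity ε Ω Ψ x

/-- Admissible (H¹, normalized) wave functions. -/
def gpAdm (Ψ : Pt → ℂ) : Prop :=
  DifferentiableOn ℝ Ψ B1 ∧
  IntegrableOn (fun x => ‖Ψ x‖ ^ 2) B1 ∧
  IntegrableOn (fun x => ‖pd1 Ψ x‖ ^ 2 + ‖pd2 Ψ x‖ ^ 2) B1 ∧
  IntegrableOn (fun x => ‖Ψ x‖ ^ 4) B1 ∧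
  IntegrableOn (fun x => (starRingEnd ℂ (Ψ x) * angMom Ψ x).re) B1 ∧
  (∫ x in B1, ‖Ψ x‖ ^ 2) = 1

/-- The GP ground-state energy: infimum of the functional over normalized functions. -/
def gpGround (ε Ω : ℝ) : ℝ := sInf {E | ∃ Ψ : Pt → ℂ, gpAdm Ψ ∧ E = gpEnergy ε Ω Ψ}

/-- A GP minimizer: a normalized admissible function attaining the infimum. -/
def IsGPMinimizer (ε Ω : ℝ) (Ψ : Pt → ℂ) : Prop :=
  gpAdm Ψ ∧ gpEnergy ε Ω Ψ = gpGround ε Ω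

/-- The Thomas-Fermi functional. -/
def tfEnergy (Ω₀ : ℝ) (ρ : Pt → ℝ) : ℝ :=
  ∫ x in B1, ((ρ x) ^ 2 - Ω₀ ^ 2 * ‖x‖ ^ 2 * ρ x / 4)

/-- Admissible TF densities: nonnegative, in L²(B₁), of total mass one. -/
def tfAdm (ρ : Pt → ℝ) : Prop :=
  IntegrableOn ρ B1 ∧ IntegrableOn (fun x => (ρ x) ^ 2) B1 ∧
  (∀ᵐ x ∂(volume.restrict B1), 0 ≤ ρ x) ∧ (∫ x in B1, ρ x) = 1

/-- The TF ground-state energy. -/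
def tfGround (Ω₀ : ℝ) : ℝ := sInf {E | ∃ ρ : Pt → ℝ, tfAdm ρ ∧ E = tfEnergy Ω₀ ρ}

/-- Radius of the TF "hole". -/
def R0 (Ω₀ : ℝ) : ℝ := Real.sqrt (1 - 4 / (Real.sqrt π * Ω₀))

/-- The TF minimizer. -/
def rhoTF (Ω₀ : ℝ) (x : Pt) : ℝ :=
  if Ω₀ ≤ 4 / Real.sqrt π then 1 / π - Ω₀ ^ 2 / 16 * (1 - 2 * ‖x‖ ^ 2)
  else max 0 (Ω₀ ^ 2 / 8 * (‖x‖ ^ 2 - 1) + Ω₀ / (2 * Real.sqrt π))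

/-- The square lattice of spacing `ℓ` restricted to radius `1 - 2√2 ℓ`. -/
def latt (ℓ : ℝ) : Set Pt :=
  {p | (∃ m : ℤ, p 0 = m * ℓ) ∧ (∃ n : ℤ, p 1 = n * ℓ) ∧ ‖p‖ ≤ 1 - 2 * Real.sqrt 2 * ℓ}

/-- The identification of the plane with `ℂ`. -/
def toC (x : Pt) : ℂ := (x 0 : ℂ) + (x 1 : ℂ) * Complex.I

/-- The phase factor carrying one vortex of degree 1 at each lattice point. -/
def gfun (ℓ : ℝ) (x : Pt) : ℂ := ∏ᶠ p ∈ latt ℓ, (toC x - toC p) / ((‖x - p‖ : ℝ) : ℂ)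

/-- The disc with holes of radius `ρr` around the lattice points removed. -/
def lambdaSet (ℓ ρr : ℝ) : Set Pt := B1 \ ⋃ p ∈ latt ℓ, Metric.ball p ρr

/-- The magnetic (covariant) kinetic energy density `|(∇ - iA)g|²` with
`A(x) = (Ω₀/2ε)(-x₂, x₁)`. -/
def covDensity (ε Ω₀ : ℝ) (g : Pt → ℂ) (x : Pt) : ℝ :=
  ‖pd1 g x - Complex.I * ((-(Ω₀ / (2 * ε)) * x 1 : ℝ) : ℂ) * g x‖ ^ 2 +
  ‖pd2 g x - Complex.I * (((Ω₀ / (2 * ε)) * x 0 : ℝ) : ℂ) * g x‖ ^ 2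

/-!
On a perforated disc the density `|(∇ - iA)g|²` is `|F - κ z̄|²`, where `F(z) = ∑ 1 / (z - p)` sums
over the vortices and `κ = Ω₀ / (2ε)`. Compare each vortex with one unit of charge spread uniformly
over its lattice cell, of side `ℓ`. The spread charge has density `1 / ℓ²`, and if it filled the
unit disc then by Newton's theorem its field would be `(π / ℓ²) z̄`; what remains,
`D = F - (π / ℓ²) z̄`, comes from the neutral cells and from the uncovered layer of width `O(ℓ)` at
the boundary. A neutral cell has vanishing dipole moment, so its field decays cubically and
`∫ |D|² = O(|log ε| / ℓ²)`.

Expanding `|D + (π / ℓ² - κ) z̄|²`, the square of the rotation gives the leading term, since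
`∫ |z|² = π / 2` on the disc. The cross term is of order `1 / ε` although Cauchy–Schwarz alone would
not show it: `∫ z / (z - p) = π (1 - |p|²)` on the disc, so it reduces to the error of a Riemann sum
over the cells. Shrinking the holes only increases the energy, so the exponent `η` can be raised at
will.
-/

open Metric (ball)
open Set (Iio Ioi Ico Ioo)
open Complex (I)
open scoped ComplexConjugate

lemma volume_real_ball_complex (a : ℂ) {R : ℝ} (hR : 0 ≤ R) :
    volume.real (ball a R) = π * R ^ 2 := by
  rw [Measure.real, Complex.volume_ball, ENNReal.toReal_mul, ENNReal.toReal_pow,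
    ENNReal.toReal_ofReal hR, mul_comm]
  rfl

section RadialKernels

/-- The radial kernel `‖w‖⁻ᵏ` on the plane, cut off to the `w` whose modulus lies in `s`. All
majorants of the Cauchy kernel below are combinations of these. -/
def radialKernel (k : ℕ) (s : Set ℝ) (w : ℂ) : ℝ := s.indicator (fun r => (r ^ k)⁻¹) ‖w‖

variable {k : ℕ} {s : Set ℝ} {w : ℂ}

lemma radialKernel_of_mem (hw : ‖w‖ ∈ s) : radialKernel k s w = (‖w‖ ^ k)⁻¹ :=
  Set.indicator_of_mem hw _

lemma radialKernel_of_notMem (hw : ‖w‖ ∉ s) : radialKernel k s w = 0 :=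
  Set.indicator_of_notMem hw _

lemma radialKernel_nonneg : 0 ≤ radialKernel k s w :=
  Set.indicator_apply_nonneg fun _ => by positivity

lemma radialKernel_sub_comm (z w : ℂ) : radialKernel k s (z - w) = radialKernel k s (w - z) := by
  rw [radialKernel, radialKernel, norm_sub_rev]

lemma radialKernel_sq : radialKernel k s w ^ 2 = radialKernel (k * 2) s w := by
  by_cases hw : ‖w‖ ∈ s
  · rw [radialKernel_of_mem hw, radialKernel_of_mem hw, inv_pow, pow_mul]
  · rw [radialKernel_of_notMem hw, radialKernel_of_notMem hw, zero_pow two_ne_zero]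

lemma measurable_radialKernel (hs : MeasurableSet s) : Measurable (radialKernel k s) := by
  have h : Measurable (s.indicator fun r : ℝ => (r ^ k)⁻¹) :=
    (measurable_id.pow_const k).inv.indicator hs
  exact h.comp measurable_norm

lemma pos_mul_indicator_inv_pow (k : ℕ) (s : Set ℝ) {r : ℝ} (hr : r ∈ Ioi 0) :
    s.indicator (fun r => (r ^ k)⁻¹) r = r * s.indicator (fun r => (r ^ (k + 1))⁻¹) r := by
  have hr0 : r ≠ 0 := ne_of_gt hr
  by_cases h : r ∈ s
  · simp only [h, Set.indicator_of_mem]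
    field_simp
    exact pow_succ r k
  · simp only [h, not_false_eq_true, Set.indicator_of_notMem, mul_zero]

lemma integrable_radialKernel_succ (hs : MeasurableSet s)
    (hf : IntegrableOn (fun r : ℝ => (r ^ k)⁻¹) s) (z : ℂ) :
    Integrable fun w => radialKernel (k + 1) s (z - w) := by
  suffices h : Integrable (radialKernel (k + 1) s) from h.comp_sub_left z
  refine (integrable_fun_norm_addHaar volume).2 ?_
  simp only [Complex.finrank_real_complex, Nat.add_one_sub_one, pow_one, smul_eq_mul]
  refine IntegrableOn.congr_fun ?_ (fun r hr => pos_mul_indicator_inv_pow k s hr) measurableSet_Ioi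
  exact ((integrable_indicator_iff hs).2 hf).integrableOn

lemma integral_radialKernel_succ (hs : MeasurableSet s) (hs0 : s ⊆ Ioi 0) (z : ℂ) :
    ∫ w, radialKernel (k + 1) s (z - w) = 2 * π * ∫ r in s, (r ^ k)⁻¹ := by
  rw [integral_sub_left_eq_self (radialKernel (k + 1) s) volume z]
  unfold radialKernel
  rw [integral_fun_norm_addHaar, volume_real_ball_complex 0 zero_le_one]
  simp only [Complex.finrank_real_complex, Nat.add_one_sub_one, pow_one, smul_eq_mul, one_pow,
    mul_one, nsmul_eq_mul, Nat.cast_ofNat]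
  rw [← setIntegral_congr_fun measurableSet_Ioi
    (fun r hr => pos_mul_indicator_inv_pow k s hr), setIntegral_indicator hs,
    Set.inter_eq_right.2 hs0, mul_assoc]

lemma integrable_radialKernel_near (R : ℝ) (z : ℂ) :
    Integrable fun w => radialKernel 1 (Ioo 0 R) (z - w) :=
  integrable_radialKernel_succ measurableSet_Ioo (by simp) z

lemma integral_radialKernel_near {R : ℝ} (hR : 0 ≤ R) (z : ℂ) :
    ∫ w, radialKernel 1 (Ioo 0 R) (z - w) = 2 * π * R := by
  rw [integral_radialKernel_succ measurableSet_Ioo Set.Ioo_subset_Ioi_self]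
  simp [hR]

lemma integrable_radialKernel_annulus {ρ : ℝ} (hρ : 0 < ρ) (R : ℝ) (z : ℂ) :
    Integrable fun w => radialKernel 2 (Ico ρ R) (z - w) := by
  refine integrable_radialKernel_succ measurableSet_Ico ?_ z
  refine IntegrableOn.mono_set (ContinuousOn.integrableOn_Icc ?_) Set.Ico_subset_Icc_self
  exact (continuousOn_id.pow 1).inv₀ fun r hr => pow_ne_zero 1 (hρ.trans_le hr.1).ne'

lemma integral_radialKernel_annulus {ρ R : ℝ} (hρ : 0 < ρ) (hR : ρ ≤ R) (z : ℂ) :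
    ∫ w, radialKernel 2 (Ico ρ R) (z - w) = 2 * π * Real.log (R / ρ) := by
  have hpos : Ico ρ R ⊆ Ioi 0 := fun r hr => hρ.trans_le hr.1
  rw [integral_radialKernel_succ measurableSet_Ico hpos]
  simp_rw [pow_one]
  rw [integral_Ico_eq_integral_Ioc, ← intervalIntegral.integral_of_le hR,
    integral_inv_of_pos hρ (hρ.trans_le hR)]

lemma inv_sq_eq_rpow (r : ℝ) : (r ^ 2)⁻¹ = r ^ (-2 : ℝ) := by
  rw [← zpow_natCast, ← zpow_neg, ← Real.rpow_intCast]
  norm_num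

lemma integrable_radialKernel_far {ℓ : ℝ} (hℓ : 0 < ℓ) (z : ℂ) :
    Integrable fun w => radialKernel 3 (Ioi ℓ) (z - w) := by
  refine integrable_radialKernel_succ measurableSet_Ioi ?_ z
  simpa only [inv_sq_eq_rpow] using integrableOn_Ioi_rpow_of_lt (by norm_num) hℓ

lemma integral_radialKernel_far {ℓ : ℝ} (hℓ : 0 < ℓ) (z : ℂ) :
    ∫ w, radialKernel 3 (Ioi ℓ) (z - w) = 2 * π / ℓ := by
  rw [integral_radialKernel_succ measurableSet_Ioi (Set.Ioi_subset_Ioi hℓ.le)]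
  simp_rw [inv_sq_eq_rpow]
  rw [integral_Ioi_rpow_of_lt (by norm_num) hℓ]
  norm_num [Real.rpow_neg_one]
  ring

lemma norm_inv_eq_radialKernel {R : ℝ} {w : ℂ} (hw : ‖w‖ < R) :
    ‖w⁻¹‖ = radialKernel 1 (Ioo 0 R) w := by
  rcases eq_or_ne w 0 with rfl | h0
  · simp [radialKernel]
  · rw [radialKernel_of_mem (Set.mem_Ioo.2 ⟨norm_pos_iff.2 h0, hw⟩), norm_inv, pow_one]

end RadialKernels

section DiscIntegrals

variable {E : Type*} [NormedAddCommGroup E] [NormedSpace ℝ E]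

lemma integrableOn_polarCoord_symm {f : ℂ → E} (hf : Integrable f) :
    IntegrableOn (fun p : ℝ × ℝ => p.1 • f (Complex.polarCoord.symm p)) polarCoord.target := by
  have hf' : Integrable (f ∘ Complex.measurableEquivRealProd.symm) :=
    (Complex.volume_preserving_equiv_real_prod.symm).integrable_comp_of_integrable hf
  have h := (integrableOn_image_iff_integrableOn_abs_det_fderiv_smul volume
    polarCoord.open_target.measurableSet
    (fun p _ => (hasFDerivAt_polarCoord_symm p).hasFDerivWithinAt) polarCoord.symm.injOn _).1
    hf'.integrableOn
  refine h.congr_fun (fun p hp => ?_) polarCoord.open_target.measurableSet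
  have hpos : 0 < p.1 := hp.1
  simp only [det_fderivPolarCoordSymm, abs_of_pos hpos]
  rfl

lemma circleAverage_eq_integral_Ioo (f : ℂ → E) (r : ℝ) :
    circleAverage f 0 r =
      (2 * π)⁻¹ • ∫ θ in Ioo (-π) π, f (Complex.polarCoord.symm (r, θ)) := by
  have hmap (θ : ℝ) : circleMap 0 r θ = Complex.polarCoord.symm (r, θ) := by
    rw [circleMap_zero, Complex.polarCoord_symm_apply, Complex.exp_mul_I, Complex.ofReal_cos,
      Complex.ofReal_sin]
  rw [circleAverage_eq_integral_add (-π),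
    intervalIntegral.integral_comp_add_right (fun θ => f (circleMap 0 r θ)),
    show 0 + -π = -π by ring, show 2 * π + -π = π by ring,
    intervalIntegral.integral_of_le (by linarith [pi_pos]), integral_Ioc_eq_integral_Ioo]
  simp_rw [hmap]

lemma integral_eq_integral_circleAverage {f : ℂ → E} (hf : Integrable f) :
    ∫ w, f w = (2 * π) • ∫ r in Ioi 0, r • circleAverage f 0 r := by
  have hpolar := integrableOn_polarCoord_symm hf
  rw [← Complex.integral_comp_polarCoord_symm]
  rw [polarCoord_target, Measure.volume_eq_prod] at hpolar ⊢
  rw [setIntegral_prod _ hpolar, ← integral_smul]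
  refine integral_congr_ae (Eventually.of_forall fun r => ?_)
  simp only
  rw [integral_smul, circleAverage_eq_integral_Ioo, smul_comm (2 * π) r,
    smul_inv_smul₀ two_pi_pos.ne']

lemma setIntegral_ball_eq_integral_circleAverage {f : ℂ → E} {R : ℝ}
    (hf : IntegrableOn f (ball 0 R)) :
    ∫ w in ball 0 R, f w = (2 * π) • ∫ r in Ioo 0 R, r • circleAverage f 0 r := by
  rw [← integral_indicator measurableSet_ball,
    integral_eq_integral_circleAverage (hf.integrable_indicator measurableSet_ball)]
  have hind : Set.EqOn (fun r => r • circleAverage ((ball 0 R).indicator f) 0 r)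
      ((Iio R).indicator fun r => r • circleAverage f 0 r) (Ioi 0) := by
    intro r hr
    have hnorm {w : ℂ} (hw : w ∈ Metric.sphere (0 : ℂ) |r|) : ‖w‖ = r := by
      rw [mem_sphere_zero_iff_norm.1 hw, abs_of_pos hr]
    by_cases hrR : r < R
    · rw [Set.indicator_of_mem (Set.mem_Iio.2 hrR)]
      refine congrArg (r • ·) (circleAverage_congr_sphere fun w hw => ?_)
      exact Set.indicator_of_mem (mem_ball_zero_iff.2 ((hnorm hw).trans_lt hrR)) f
    · rw [Set.indicator_of_notMem (by simpa using hrR)]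
      have hzero : circleAverage ((ball 0 R).indicator f) 0 r =
          circleAverage (fun _ => (0 : E)) 0 r :=
        circleAverage_congr_sphere fun w hw =>
          Set.indicator_of_notMem (by simpa [hnorm hw] using hrR) f
      simp only [hzero, circleAverage_def, intervalIntegral.integral_zero, smul_zero]
  rw [setIntegral_congr_fun measurableSet_Ioi hind, setIntegral_indicator measurableSet_Iio]
  rfl

lemma circleAverage_inv_sub_of_lt_norm {z : ℂ} {r : ℝ} (hrz : |r| < ‖z‖) :
    circleAverage (fun w => (z - w)⁻¹) 0 r = z⁻¹ := by
  have hne {w : ℂ} (hw : w ∈ Metric.closedBall (0 : ℂ) |r|) : z - w ≠ 0 := by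
    rw [mem_closedBall_zero_iff] at hw
    exact sub_ne_zero.2 fun h => (hw.trans_lt hrz).ne (by rw [h])
  have hdiff : DifferentiableOn ℂ (fun w => (z - w)⁻¹) (Metric.closedBall 0 |r|) := by
    intro w hw
    have := hne hw
    fun_prop (disch := assumption)
  have hmean := (hdiff.mono Metric.closure_ball_subset_closedBall).diffContOnCl.circleAverage
  simpa only [sub_zero] using hmean

-- On the circle, `conj w = r² / w` turns the kernel into the conjugate of a function of `w` that is
-- holomorphic in the disc and vanishes at its center.
lemma circleAverage_inv_sub_of_norm_lt {z : ℂ} {r : ℝ} (hrz : ‖z‖ < r) :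
    circleAverage (fun w => (z - w)⁻¹) 0 r = 0 := by
  have hr : 0 < r := (norm_nonneg z).trans_lt hrz
  have hne {w : ℂ} (hw : w ∈ Metric.closedBall (0 : ℂ) |r|) : conj z * w - (r : ℂ) ^ 2 ≠ 0 := by
    rw [mem_closedBall_zero_iff, abs_of_pos hr] at hw
    refine sub_ne_zero.2 fun h => (?_ : ‖conj z * w‖ < ‖(r : ℂ) ^ 2‖).ne (by rw [h])
    rw [norm_mul, RCLike.norm_conj, norm_pow, Complex.norm_real, Real.norm_of_nonneg hr.le]
    nlinarith [norm_nonneg z]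
  have hdiff : DifferentiableOn ℂ (fun w => w / (conj z * w - (r : ℂ) ^ 2))
      (Metric.closedBall 0 |r|) := by
    intro w hw
    have := hne hw
    fun_prop (disch := assumption)
  have hmean := (hdiff.mono Metric.closure_ball_subset_closedBall).diffContOnCl.circleAverage
  have hconj : Set.EqOn (fun w => (z - w)⁻¹)
      (Complex.conjCLE.toContinuousLinearMap ∘ fun w => w / (conj z * w - (r : ℂ) ^ 2))
      (Metric.sphere 0 |r|) := by
    intro w hw
    have hw0 : w ≠ 0 := Metric.ne_of_mem_sphere hw (abs_pos.2 hr.ne').ne'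
    have hsq : w * conj w = (r : ℂ) ^ 2 := by
      rw [Complex.mul_conj', mem_sphere_zero_iff_norm.1 hw, abs_of_pos hr]
    have hzw : (conj z * w - (r : ℂ) ^ 2) / w = conj (z - w) := by
      rw [← hsq, map_sub]
      field_simp
    simp [← inv_div _ w, hzw]
  rw [circleAverage_congr_sphere hconj, ContinuousLinearMap.circleAverage_comp_comm _
    (hdiff.continuousOn.mono Metric.sphere_subset_closedBall).circleIntegrable', hmean]
  simp

lemma integrableOn_inv_sub {z : ℂ} {R : ℝ} {s : Set ℂ} (hm : MeasurableSet s)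
    (hs : s ⊆ ball z R) : IntegrableOn (fun w => (z - w)⁻¹) s := by
  refine (integrable_radialKernel_near R z).integrableOn.mono'
    (measurable_const.sub measurable_id).inv.aestronglyMeasurable ?_
  filter_upwards [ae_restrict_mem hm] with w hw
  exact (norm_inv_eq_radialKernel (mem_ball_iff_norm'.1 (hs hw))).le

lemma integrableOn_inv_sub_ball (z : ℂ) (R : ℝ) :
    IntegrableOn (fun w => (z - w)⁻¹) (ball 0 R) :=
  integrableOn_inv_sub measurableSet_ball (R := R + ‖z‖)
    (Metric.ball_subset_ball' (by rw [dist_zero_left]))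

lemma setIntegral_ball_inv_sub {z : ℂ} {R : ℝ} (hz : ‖z‖ < R) :
    ∫ w in ball 0 R, (z - w)⁻¹ = π * conj z := by
  have hradial : ∀ᵐ r : ℝ, r ∈ Ioo 0 R → r • circleAverage (fun w => (z - w)⁻¹) 0 r =
      (Iio ‖z‖).indicator (fun r : ℝ => (r : ℂ) * z⁻¹) r := by
    filter_upwards [Measure.ae_ne volume ‖z‖] with r hne hr
    rcases hne.lt_or_gt with hlt | hgt
    · rw [circleAverage_inv_sub_of_lt_norm (by rwa [abs_of_pos hr.1]),
        Set.indicator_of_mem (Set.mem_Iio.2 hlt), Complex.real_smul]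
    · rw [circleAverage_inv_sub_of_norm_lt hgt, smul_zero,
        Set.indicator_of_notMem (by simpa using hgt.le)]
  have hIoo : Ioo 0 R ∩ Iio ‖z‖ = Ioo 0 ‖z‖ := by
    rw [Set.Ioo_inter_Iio, min_eq_right hz.le]
  rw [setIntegral_ball_eq_integral_circleAverage (integrableOn_inv_sub_ball z R),
    setIntegral_congr_ae measurableSet_Ioo hradial, setIntegral_indicator measurableSet_Iio, hIoo,
    ← integral_Ioc_eq_integral_Ioo, ← intervalIntegral.integral_of_le (norm_nonneg z),
    intervalIntegral.integral_mul_const, intervalIntegral.integral_ofReal, integral_id]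
  rcases eq_or_ne z 0 with rfl | hz0
  · simp
  · have hsq : conj z * z = (‖z‖ : ℂ) ^ 2 := Complex.conj_mul' z
    rw [Complex.real_smul]
    push_cast
    field_simp
    rw [mul_comm z, hsq]
    ring

lemma integrableOn_ball_norm_sq (R : ℝ) : IntegrableOn (fun z : ℂ => ‖z‖ ^ 2) (ball 0 R) :=
  ((continuous_norm.pow 2).continuousOn.integrableOn_compact
    (isCompact_closedBall 0 R)).mono_set Metric.ball_subset_closedBall

lemma setIntegral_ball_norm_sq {R : ℝ} (hR : 0 ≤ R) :
    ∫ w in ball (0 : ℂ) R, ‖w‖ ^ 2 = π * R ^ 4 / 2 := by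
  have hradial : Set.EqOn (fun r => r • circleAverage (fun w : ℂ => ‖w‖ ^ 2) 0 r)
      (fun r => r ^ 3) (Ioo 0 R) := by
    intro r _
    have hconst : circleAverage (fun w : ℂ => ‖w‖ ^ 2) 0 r = r ^ 2 :=
      circleAverage_const_on_circle fun w hw => by
        rw [mem_sphere_zero_iff_norm.1 hw, sq_abs]
    simp only [hconst, smul_eq_mul]
    ring
  rw [setIntegral_ball_eq_integral_circleAverage (integrableOn_ball_norm_sq R),
    setIntegral_congr_fun measurableSet_Ioo hradial, ← integral_Ioc_eq_integral_Ioo,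
    ← intervalIntegral.integral_of_le hR, integral_pow, smul_eq_mul]
  push_cast
  ring

lemma mul_inv_sub_eq {z p : ℂ} (hz : z ≠ p) : z * (z - p)⁻¹ = 1 - p * (p - z)⁻¹ := by
  have h : z - p ≠ 0 := sub_ne_zero.2 hz
  rw [← neg_sub z p, inv_neg]
  field_simp
  ring

lemma ae_mul_inv_sub_eq (p : ℂ) (s : Set ℂ) :
    (fun z => 1 - p * (p - z)⁻¹) =ᵐ[volume.restrict s] fun z => z * (z - p)⁻¹ :=
  ae_restrict_of_ae ((Measure.ae_ne volume p).mono fun _ hz => (mul_inv_sub_eq hz).symm)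

lemma integrableOn_mul_inv_sub (p : ℂ) (R : ℝ) :
    IntegrableOn (fun z => z * (z - p)⁻¹) (ball 0 R) := by
  refine Integrable.congr ?_ (ae_mul_inv_sub_eq p (ball 0 R))
  exact (integrableOn_const measure_ball_lt_top.ne).sub
    ((integrableOn_inv_sub_ball p R).const_mul p)

lemma setIntegral_ball_mul_inv_sub {p : ℂ} {R : ℝ} (hp : ‖p‖ < R) :
    ∫ z in ball 0 R, z * (z - p)⁻¹ = (π * (R ^ 2 - ‖p‖ ^ 2) : ℝ) := by
  have hsq : p * conj p = (‖p‖ : ℂ) ^ 2 := Complex.mul_conj' p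
  have hone : IntegrableOn (fun _ => (1 : ℂ)) (ball (0 : ℂ) R) :=
    integrableOn_const measure_ball_lt_top.ne
  rw [← integral_congr_ae (ae_mul_inv_sub_eq p (ball 0 R)),
    integral_sub hone ((integrableOn_inv_sub_ball p R).const_mul p), integral_const_mul,
    setIntegral_ball_inv_sub hp, setIntegral_const,
    volume_real_ball_complex 0 ((norm_nonneg p).trans hp.le), mul_left_comm, hsq,
    Complex.real_smul]
  push_cast
  ring

end DiscIntegrals

section Cells

/-- The half-open square of side `ℓ` centered at `p`. Half-open cells make the cells of a square
lattice a genuine partition of the plane. -/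
def cell (ℓ : ℝ) (p : ℂ) : Set ℂ :=
  Ico (p.re - ℓ / 2) (p.re + ℓ / 2) ×ℂ Ico (p.im - ℓ / 2) (p.im + ℓ / 2)

variable {E : Type*} [NormedAddCommGroup E] {ℓ : ℝ} {p w : ℂ}

lemma measurableSet_cell (ℓ : ℝ) (p : ℂ) : MeasurableSet (cell ℓ p) :=
  (Complex.measurable_re measurableSet_Ico).inter (Complex.measurable_im measurableSet_Ico)

lemma norm_sub_sq_le_of_mem_cell (hw : w ∈ cell ℓ p) : ‖w - p‖ ^ 2 ≤ ℓ ^ 2 / 2 := by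
  obtain ⟨⟨hre, hre'⟩, him, him'⟩ := hw
  rw [Complex.sq_norm, Complex.normSq_apply, Complex.sub_re, Complex.sub_im]
  nlinarith

lemma norm_sub_lt_of_mem_cell (hℓ : 0 < ℓ) (hw : w ∈ cell ℓ p) : ‖w - p‖ < ℓ :=
  lt_of_pow_lt_pow_left₀ 2 hℓ.le (by nlinarith [norm_sub_sq_le_of_mem_cell hw])

lemma cell_subset_ball (hℓ : 0 < ℓ) (p : ℂ) : cell ℓ p ⊆ ball p ℓ := fun _ hw =>
  mem_ball_iff_norm.2 (norm_sub_lt_of_mem_cell hℓ hw)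

lemma setIntegral_cell_mul (ℓ : ℝ) (p : ℂ) (f g : ℝ → ℝ) :
    ∫ w in cell ℓ p, f w.re * g w.im =
      (∫ x in Ico (p.re - ℓ / 2) (p.re + ℓ / 2), f x) *
        ∫ y in Ico (p.im - ℓ / 2) (p.im + ℓ / 2), g y := by
  have hpre : cell ℓ p = Complex.measurableEquivRealProd ⁻¹'
      (Ico (p.re - ℓ / 2) (p.re + ℓ / 2) ×ˢ Ico (p.im - ℓ / 2) (p.im + ℓ / 2)) := rfl
  rw [← setIntegral_prod_mul, hpre]
  exact Complex.volume_preserving_equiv_real_prod.setIntegral_preimage_emb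
    Complex.measurableEquivRealProd.measurableEmbedding (fun q : ℝ × ℝ => f q.1 * g q.2) _

lemma volume_real_cell (hℓ : 0 < ℓ) (p : ℂ) : volume.real (cell ℓ p) = ℓ ^ 2 := by
  have h := setIntegral_cell_mul ℓ p (fun _ => 1) (fun _ => 1)
  simp only [mul_one, setIntegral_const, smul_eq_mul, Measure.real, Real.volume_Ico] at h
  rw [Measure.real, h, ENNReal.toReal_ofReal (by linarith), ENNReal.toReal_ofReal (by linarith)]
  ring

lemma integrableOn_cell_of_continuous {f : ℂ → E} (hf : Continuous f) (hℓ : 0 < ℓ) (p : ℂ) :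
    IntegrableOn f (cell ℓ p) :=
  (hf.continuousOn.integrableOn_compact (isCompact_closedBall p ℓ)).mono_set
    ((cell_subset_ball hℓ p).trans Metric.ball_subset_closedBall)

lemma setIntegral_Ico_sub_center (hℓ : 0 < ℓ) (a : ℝ) :
    ∫ x in Ico (a - ℓ / 2) (a + ℓ / 2), (x - a) = 0 := by
  rw [integral_Ico_eq_integral_Ioc, ← intervalIntegral.integral_of_le (by linarith),
    intervalIntegral.integral_comp_sub_right (fun x => x), integral_id]
  ring

lemma setIntegral_cell_sub_center (hℓ : 0 < ℓ) (p : ℂ) : ∫ w in cell ℓ p, (w - p) = 0 := by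
  have hlin : IntegrableOn (fun w => w - p) (cell ℓ p) :=
    integrableOn_cell_of_continuous (continuous_id.sub continuous_const) hℓ p
  have hre := setIntegral_cell_mul ℓ p (fun x => x - p.re) (fun _ => 1)
  have him := setIntegral_cell_mul ℓ p (fun _ => 1) (fun y => y - p.im)
  rw [setIntegral_Ico_sub_center hℓ] at hre him
  apply Complex.ext
  · refine (Complex.reCLM.integral_comp_comm hlin).symm.trans ?_
    simpa using hre
  · refine (Complex.imCLM.integral_comp_comm hlin).symm.trans ?_
    simpa using him

lemma setIntegral_cell_linear (hℓ : 0 < ℓ) (p a b : ℂ) :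
    ∫ w in cell ℓ p, (a + b * (w - p)) = ℓ ^ 2 * a := by
  have hconst : IntegrableOn (fun _ => a) (cell ℓ p) :=
    integrableOn_cell_of_continuous continuous_const hℓ p
  have hlin : IntegrableOn (fun w => b * (w - p)) (cell ℓ p) :=
    integrableOn_cell_of_continuous
      (continuous_const.mul (continuous_id.sub continuous_const)) hℓ p
  rw [integral_add hconst hlin, setIntegral_const, integral_const_mul,
    setIntegral_cell_sub_center hℓ, volume_real_cell hℓ, mul_zero, add_zero, Complex.real_smul,
    Complex.ofReal_pow]

end Cells

section Tilings

/-- `S` is the set of centers of finitely many disjoint `ℓ`-cells which lie in the unit disc and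
cover it up to a boundary layer of width `4ℓ`. This is all that is needed from the vortex
lattice. -/
structure IsDiscTiling (ℓ : ℝ) (S : Finset ℂ) : Prop where
  side_pos : 0 < ℓ
  side_lt : 4 * ℓ < 1
  pairwiseDisjoint_cell : (S : Set ℂ).PairwiseDisjoint (cell ℓ)
  cell_subset_ball_one : ∀ p ∈ S, cell ℓ p ⊆ ball 0 1
  ball_subset_biUnion_cell : ball 0 (1 - 4 * ℓ) ⊆ ⋃ p ∈ S, cell ℓ p

/-- The part of the unit disc that is not covered by the `ℓ`-cells centered in `S`. -/
def boundaryLayer (ℓ : ℝ) (S : Finset ℂ) : Set ℂ := ball 0 1 \ ⋃ p ∈ S, cell ℓ p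

lemma measurableSet_boundaryLayer (ℓ : ℝ) (S : Finset ℂ) : MeasurableSet (boundaryLayer ℓ S) :=
  measurableSet_ball.diff (S.measurableSet_biUnion fun p _ => measurableSet_cell ℓ p)

lemma boundaryLayer_subset_ball (ℓ : ℝ) (S : Finset ℂ) : boundaryLayer ℓ S ⊆ ball 0 1 :=
  Set.sdiff_subset

lemma volume_boundaryLayer_ne_top (ℓ : ℝ) (S : Finset ℂ) : volume (boundaryLayer ℓ S) ≠ ⊤ :=
  ne_top_of_le_ne_top measure_ball_lt_top.ne (measure_mono (boundaryLayer_subset_ball ℓ S))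

namespace IsDiscTiling

variable {E : Type*} [NormedAddCommGroup E] [NormedSpace ℝ E] {ℓ : ℝ} {S : Finset ℂ} {p q w : ℂ}

lemma center_mem_ball (hT : IsDiscTiling ℓ S) (hp : p ∈ S) : p ∈ ball 0 1 := by
  have hℓ := hT.side_pos
  refine hT.cell_subset_ball_one p hp ⟨?_, ?_⟩ <;> constructor <;> linarith

lemma norm_center_lt (hT : IsDiscTiling ℓ S) (hp : p ∈ S) : ‖p‖ < 1 :=
  mem_ball_zero_iff.1 (hT.center_mem_ball hp)

-- The midpoint of two closer centers would lie in both cells.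
lemma le_norm_sub (hT : IsDiscTiling ℓ S) (hp : p ∈ S) (hq : q ∈ S) (hpq : p ≠ q) :
    ℓ ≤ ‖p - q‖ := by
  by_contra! hlt
  have hre := abs_lt.1 ((Complex.abs_re_le_norm (p - q)).trans_lt hlt)
  have him := abs_lt.1 ((Complex.abs_im_le_norm (p - q)).trans_lt hlt)
  rw [Complex.sub_re] at hre
  rw [Complex.sub_im] at him
  let m : ℂ := ⟨(p.re + q.re) / 2, (p.im + q.im) / 2⟩
  have hmp : m ∈ cell ℓ p := by
    refine ⟨⟨?_, ?_⟩, ?_, ?_⟩ <;> dsimp only [m] <;> linarith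
  have hmq : m ∈ cell ℓ q := by
    refine ⟨⟨?_, ?_⟩, ?_, ?_⟩ <;> dsimp only [m] <;> linarith
  exact Set.disjoint_left.1 (hT.pairwiseDisjoint_cell hp hq hpq) hmp hmq

lemma le_norm_of_mem_boundaryLayer (hT : IsDiscTiling ℓ S) (hw : w ∈ boundaryLayer ℓ S) :
    1 - 4 * ℓ ≤ ‖w‖ := by
  by_contra! hlt
  exact hw.2 (hT.ball_subset_biUnion_cell (mem_ball_zero_iff.2 hlt))

lemma volume_real_boundaryLayer_le (hT : IsDiscTiling ℓ S) :
    volume.real (boundaryLayer ℓ S) ≤ 8 * π * ℓ := by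
  have hℓ := hT.side_lt
  have hsub : boundaryLayer ℓ S ⊆ ball 0 1 \ ball 0 (1 - 4 * ℓ) :=
    Set.sdiff_subset_sdiff_right hT.ball_subset_biUnion_cell
  calc volume.real (boundaryLayer ℓ S)
      ≤ volume.real (ball (0 : ℂ) 1 \ ball 0 (1 - 4 * ℓ)) :=
        measureReal_mono hsub
          (ne_top_of_le_ne_top measure_ball_lt_top.ne (measure_mono Set.sdiff_subset))
    _ = π * 1 ^ 2 - π * (1 - 4 * ℓ) ^ 2 := by
        rw [measureReal_sdiff (Metric.ball_subset_ball (by linarith [hT.side_pos]))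
          measurableSet_ball, volume_real_ball_complex _ zero_le_one,
          volume_real_ball_complex _ (by linarith)]
    _ ≤ 8 * π * ℓ := by nlinarith [pi_pos, sq_nonneg ℓ]

lemma setIntegral_ball_eq_add (hT : IsDiscTiling ℓ S) {f : ℂ → E}
    (hf : IntegrableOn f (ball 0 1)) :
    ∫ w in ball 0 1, f w = (∑ p ∈ S, ∫ w in cell ℓ p, f w) + ∫ w in boundaryLayer ℓ S, f w := by
  have hsub : (⋃ p ∈ S, cell ℓ p) ⊆ ball 0 1 := Set.iUnion₂_subset hT.cell_subset_ball_one
  rw [← integral_biUnion_finset S (fun p _ => measurableSet_cell ℓ p) hT.pairwiseDisjoint_cell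
      (fun p hp => hf.mono_set (hT.cell_subset_ball_one p hp)), boundaryLayer,
    ← setIntegral_union Set.disjoint_sdiff_right (measurableSet_boundaryLayer ℓ S)
      (hf.mono_set hsub) (hf.mono_set (boundaryLayer_subset_ball ℓ S)),
    Set.union_sdiff_cancel hsub]

lemma card_mul_sq_add (hT : IsDiscTiling ℓ S) :
    S.card * ℓ ^ 2 + volume.real (boundaryLayer ℓ S) = π := by
  have hone : IntegrableOn (fun _ => (1 : ℝ)) (ball (0 : ℂ) 1) :=
    integrableOn_const measure_ball_lt_top.ne
  simpa [volume_real_cell hT.side_pos, volume_real_ball_complex] using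
    (hT.setIntegral_ball_eq_add hone).symm

lemma card_mul_sq_le (hT : IsDiscTiling ℓ S) : S.card * ℓ ^ 2 ≤ π := by
  linarith [hT.card_mul_sq_add, measureReal_nonneg (μ := volume) (s := boundaryLayer ℓ S)]

end IsDiscTiling

end Tilings

section CellDefect

/-- The field at `z` of a unit vortex at `p`, minus the field of the same vorticity spread
uniformly over the cell around `p`. -/
def cellDefect (ℓ : ℝ) (z p : ℂ) : ℂ := (z - p)⁻¹ - ⨍ w in cell ℓ p, (z - w)⁻¹

/-- An integrable kernel whose integral over a cell dominates the cell defect at `z` away from the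
center of the cell; here `u = z - w`. -/
def defectKernel (ℓ : ℝ) (u : ℂ) : ℝ :=
  2 / ℓ ^ 2 * radialKernel 1 (Ioo 0 (2 * ℓ)) u + 2 * radialKernel 3 (Ioi ℓ) u

variable {ℓ : ℝ} {S : Finset ℂ} {z p w u : ℂ}

lemma defectKernel_nonneg : 0 ≤ defectKernel ℓ u :=
  add_nonneg (mul_nonneg (by positivity) radialKernel_nonneg)
    (mul_nonneg zero_le_two radialKernel_nonneg)

lemma integrable_defectKernel (hℓ : 0 < ℓ) (z : ℂ) :
    Integrable fun w => defectKernel ℓ (z - w) :=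
  ((integrable_radialKernel_near _ z).const_mul _).add
    ((integrable_radialKernel_far hℓ z).const_mul _)

lemma integral_defectKernel (hℓ : 0 < ℓ) (z : ℂ) :
    ∫ w, defectKernel ℓ (z - w) = 12 * π / ℓ := by
  unfold defectKernel
  rw [integral_add ((integrable_radialKernel_near _ z).const_mul _)
      ((integrable_radialKernel_far hℓ z).const_mul _), integral_const_mul, integral_const_mul,
    integral_radialKernel_near (by positivity), integral_radialKernel_far hℓ]
  field_simp
  ring

lemma mul_inv_norm_le_defectKernel (h : ‖u‖ < 2 * ℓ) :
    2 / ℓ ^ 2 * ‖u‖⁻¹ ≤ defectKernel ℓ u := by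
  rw [← norm_inv, norm_inv_eq_radialKernel h]
  exact le_add_of_nonneg_right (mul_nonneg zero_le_two radialKernel_nonneg)

lemma mul_inv_norm_pow_three_le_defectKernel (h : ℓ < ‖u‖) :
    2 * (‖u‖ ^ 3)⁻¹ ≤ defectKernel ℓ u := by
  rw [← radialKernel_of_mem (k := 3) (Set.mem_Ioi.2 h)]
  exact le_add_of_nonneg_left (mul_nonneg (by positivity) radialKernel_nonneg)

lemma integrableOn_inv_sub_cell (hℓ : 0 < ℓ) (z p : ℂ) :
    IntegrableOn (fun w => (z - w)⁻¹) (cell ℓ p) :=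
  integrableOn_inv_sub (measurableSet_cell ℓ p) (R := ℓ + ‖p - z‖)
    ((cell_subset_ball hℓ p).trans (Metric.ball_subset_ball' (by rw [dist_eq_norm])))

lemma setAverage_cell_eq (hℓ : 0 < ℓ) (p : ℂ) (f : ℂ → ℂ) :
    ⨍ w in cell ℓ p, f w = ((ℓ : ℂ) ^ 2)⁻¹ * ∫ w in cell ℓ p, f w := by
  rw [setAverage_eq, volume_real_cell hℓ, Complex.real_smul, Complex.ofReal_inv,
    Complex.ofReal_pow]

lemma norm_setAverage_cell_le (hℓ : 0 < ℓ) (p : ℂ) {f : ℂ → ℂ} {g : ℂ → ℝ}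
    (hg : IntegrableOn g (cell ℓ p))
    (hfg : ∀ᵐ w ∂volume.restrict (cell ℓ p), ‖f w‖ ≤ ℓ ^ 2 * g w) :
    ‖⨍ w in cell ℓ p, f w‖ ≤ ∫ w in cell ℓ p, g w := by
  have hnorm : ‖∫ w in cell ℓ p, f w‖ ≤ ℓ ^ 2 * ∫ w in cell ℓ p, g w := by
    rw [← integral_const_mul]
    exact norm_integral_le_of_norm_le (hg.const_mul _) hfg
  rw [setAverage_cell_eq hℓ, norm_mul, norm_inv, norm_pow, Complex.norm_real,
    Real.norm_of_nonneg hℓ.le]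
  exact (inv_mul_le_iff₀ (by positivity)).2 hnorm

lemma norm_sub_lt_add_of_mem_cell (hℓ : 0 < ℓ) (hw : w ∈ cell ℓ p) : ‖z - w‖ < ‖z - p‖ + ℓ := by
  have htri := norm_sub_le_norm_sub_add_norm_sub z p w
  linarith [norm_sub_lt_of_mem_cell hℓ hw, norm_sub_rev w p]

lemma norm_cellDefect_le_near (hℓ : 0 < ℓ) (hz : ‖z - p‖ < ℓ / 2) :
    ‖cellDefect ℓ z p‖ ≤
      radialKernel 1 (Ioo 0 (ℓ / 2)) (z - p) + ∫ w in cell ℓ p, defectKernel ℓ (z - w) := by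
  have hbound : ∀ w ∈ cell ℓ p, ‖(z - w)⁻¹‖ ≤ ℓ ^ 2 * defectKernel ℓ (z - w) := by
    intro w hw
    have hnear : ‖z - w‖ < 2 * ℓ := by linarith [norm_sub_lt_add_of_mem_cell hℓ hw (z := z)]
    calc ‖(z - w)⁻¹‖ ≤ 2 * ‖z - w‖⁻¹ := by
          rw [norm_inv]
          linarith [inv_nonneg.2 (norm_nonneg (z - w))]
      _ = ℓ ^ 2 * (2 / ℓ ^ 2 * ‖z - w‖⁻¹) := by field_simp
      _ ≤ _ := by gcongr; exact mul_inv_norm_le_defectKernel hnear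
  refine (norm_sub_le _ _).trans (add_le_add (norm_inv_eq_radialKernel hz).le ?_)
  exact norm_setAverage_cell_le hℓ p (integrable_defectKernel hℓ z).integrableOn
    (ae_restrict_of_forall_mem (measurableSet_cell ℓ p) hbound)

-- The first-order term drops out because `p` is the center of mass of its cell.
lemma cellDefect_eq_setAverage (hℓ : 0 < ℓ) (z p : ℂ) :
    cellDefect ℓ z p =
      -⨍ w in cell ℓ p, ((z - w)⁻¹ - ((z - p)⁻¹ + ((z - p) ^ 2)⁻¹ * (w - p))) := by
  have hlin : IntegrableOn (fun w => (z - p)⁻¹ + ((z - p) ^ 2)⁻¹ * (w - p)) (cell ℓ p) :=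
    integrableOn_cell_of_continuous
      (continuous_const.add (continuous_const.mul (continuous_id.sub continuous_const))) hℓ p
  have hℓ0 : (ℓ : ℂ) ≠ 0 := Complex.ofReal_ne_zero.2 hℓ.ne'
  rw [cellDefect, setAverage_cell_eq hℓ, setAverage_cell_eq hℓ,
    integral_sub (integrableOn_inv_sub_cell hℓ z p) hlin, setIntegral_cell_linear hℓ]
  field_simp
  ring

lemma inv_sub_taylor (hp : z ≠ p) (hw : z ≠ w) :
    (z - w)⁻¹ - ((z - p)⁻¹ + ((z - p) ^ 2)⁻¹ * (w - p)) =
      (w - p) ^ 2 * (((z - p) ^ 2)⁻¹ * (z - w)⁻¹) := by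
  have hzp : z - p ≠ 0 := sub_ne_zero.2 hp
  have hzw : z - w ≠ 0 := sub_ne_zero.2 hw
  field_simp
  ring

lemma inv_sq_mul_inv_le_defectKernel (hℓ : 0 < ℓ) (hz : ℓ / 2 ≤ ‖z - p‖) (hw : w ∈ cell ℓ p)
    (hne : z ≠ w) :
    1 / 2 * ((‖z - p‖ ^ 2)⁻¹ * ‖z - w‖⁻¹) ≤ defectKernel ℓ (z - w) := by
  have hpos : 0 < ‖z - w‖ := norm_pos_iff.2 (sub_ne_zero.2 hne)
  rcases lt_or_ge ‖z - w‖ (2 * ℓ) with hnear | hfar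
  · calc 1 / 2 * ((‖z - p‖ ^ 2)⁻¹ * ‖z - w‖⁻¹)
        ≤ 1 / 2 * (((ℓ / 2) ^ 2)⁻¹ * ‖z - w‖⁻¹) := by gcongr
      _ = 2 / ℓ ^ 2 * ‖z - w‖⁻¹ := by field_simp
      _ ≤ _ := mul_inv_norm_le_defectKernel hnear
  · have hhalf : ‖z - w‖ / 2 ≤ ‖z - p‖ := by
      linarith [norm_sub_lt_add_of_mem_cell hℓ hw (z := z)]
    calc 1 / 2 * ((‖z - p‖ ^ 2)⁻¹ * ‖z - w‖⁻¹)
        ≤ 1 / 2 * (((‖z - w‖ / 2) ^ 2)⁻¹ * ‖z - w‖⁻¹) := by gcongr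
      _ = 2 * (‖z - w‖ ^ 3)⁻¹ := by field_simp
      _ ≤ _ := mul_inv_norm_pow_three_le_defectKernel (by linarith)

lemma norm_cellDefect_le_far (hℓ : 0 < ℓ) (hz : ℓ / 2 ≤ ‖z - p‖) :
    ‖cellDefect ℓ z p‖ ≤ ∫ w in cell ℓ p, defectKernel ℓ (z - w) := by
  have hzp : z ≠ p := sub_ne_zero.1 (norm_pos_iff.1 ((half_pos hℓ).trans_le hz))
  rw [cellDefect_eq_setAverage hℓ, norm_neg]
  refine norm_setAverage_cell_le hℓ p (integrable_defectKernel hℓ z).integrableOn ?_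
  filter_upwards [ae_restrict_mem (measurableSet_cell ℓ p),
    ae_restrict_of_ae (Measure.ae_ne volume z)] with w hw hwz
  rw [inv_sub_taylor hzp hwz.symm, norm_mul, norm_mul, norm_inv, norm_inv, norm_pow, norm_pow]
  calc ‖w - p‖ ^ 2 * ((‖z - p‖ ^ 2)⁻¹ * ‖z - w‖⁻¹)
      ≤ ℓ ^ 2 / 2 * ((‖z - p‖ ^ 2)⁻¹ * ‖z - w‖⁻¹) := by
        gcongr
        exact norm_sub_sq_le_of_mem_cell hw
    _ = ℓ ^ 2 * (1 / 2 * ((‖z - p‖ ^ 2)⁻¹ * ‖z - w‖⁻¹)) := by ring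
    _ ≤ _ := by
        gcongr
        exact inv_sq_mul_inv_le_defectKernel hℓ hz hw hwz.symm

lemma norm_cellDefect_le (hℓ : 0 < ℓ) (z p : ℂ) :
    ‖cellDefect ℓ z p‖ ≤
      radialKernel 1 (Ioo 0 (ℓ / 2)) (z - p) + ∫ w in cell ℓ p, defectKernel ℓ (z - w) := by
  rcases lt_or_ge ‖z - p‖ (ℓ / 2) with hz | hz
  · exact norm_cellDefect_le_near hℓ hz
  · exact (norm_cellDefect_le_far hℓ hz).trans (le_add_of_nonneg_left radialKernel_nonneg)

lemma IsDiscTiling.norm_sum_cellDefect_le (hT : IsDiscTiling ℓ S) (z : ℂ) :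
    ‖∑ p ∈ S, cellDefect ℓ z p‖ ≤
      12 * π / ℓ + ∑ p ∈ S, radialKernel 1 (Ioo 0 (ℓ / 2)) (z - p) := by
  have hkernel := integrable_defectKernel hT.side_pos z
  calc ‖∑ p ∈ S, cellDefect ℓ z p‖
      ≤ ∑ p ∈ S, (radialKernel 1 (Ioo 0 (ℓ / 2)) (z - p) +
          ∫ w in cell ℓ p, defectKernel ℓ (z - w)) :=
        norm_sum_le_of_le S fun p _ => norm_cellDefect_le hT.side_pos z p
    _ = (∫ w in ⋃ p ∈ S, cell ℓ p, defectKernel ℓ (z - w)) +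
          ∑ p ∈ S, radialKernel 1 (Ioo 0 (ℓ / 2)) (z - p) := by
        rw [Finset.sum_add_distrib, add_comm,
          integral_biUnion_finset S (fun p _ => measurableSet_cell ℓ p)
            hT.pairwiseDisjoint_cell fun p _ => hkernel.integrableOn]
    _ ≤ 12 * π / ℓ + ∑ p ∈ S, radialKernel 1 (Ioo 0 (ℓ / 2)) (z - p) := by
        gcongr
        rw [← integral_defectKernel hT.side_pos z]
        exact setIntegral_le_integral hkernel (Eventually.of_forall fun w => defectKernel_nonneg)

-- At most one center lies within `ℓ / 2` of `z`, so the square of the sum is the sum of squares.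
lemma IsDiscTiling.sum_radialKernel_sq_le (hT : IsDiscTiling ℓ S) {ρ : ℝ}
    (hz : ∀ p ∈ S, ρ ≤ ‖z - p‖) :
    (∑ p ∈ S, radialKernel 1 (Ioo 0 (ℓ / 2)) (z - p)) ^ 2 ≤
      ∑ p ∈ S, radialKernel 2 (Ico ρ 1) (z - p) := by
  have hℓ := hT.side_lt
  by_cases h : ∃ q ∈ S, radialKernel 1 (Ioo 0 (ℓ / 2)) (z - q) ≠ 0
  · obtain ⟨q, hq, hq0⟩ := h
    have hnear : ∀ p, radialKernel 1 (Ioo 0 (ℓ / 2)) (z - p) ≠ 0 → ‖z - p‖ < ℓ / 2 :=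
      fun p hp => (Set.mem_of_indicator_ne_zero hp).2
    have hmem : ‖z - q‖ ∈ Ico ρ 1 := ⟨hz q hq, by linarith [hnear q hq0, hT.side_pos]⟩
    have hmem' : ‖z - q‖ ∈ Ioo 0 (ℓ / 2) := Set.mem_of_indicator_ne_zero hq0
    calc (∑ p ∈ S, radialKernel 1 (Ioo 0 (ℓ / 2)) (z - p)) ^ 2
        = radialKernel 1 (Ioo 0 (ℓ / 2)) (z - q) ^ 2 := by
          rw [Finset.sum_eq_single_of_mem q hq]
          intro p hp hpq
          by_contra hp0
          have htri := norm_sub_le (z - q) (z - p)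
          rw [sub_sub_sub_cancel_left] at htri
          linarith [hT.le_norm_sub hp hq hpq, hnear p hp0, hnear q hq0]
      _ = radialKernel 2 (Ico ρ 1) (z - q) := by
          rw [radialKernel_sq, radialKernel_of_mem hmem', radialKernel_of_mem hmem]
      _ ≤ ∑ p ∈ S, radialKernel 2 (Ico ρ 1) (z - p) :=
          Finset.single_le_sum (f := fun p => radialKernel 2 (Ico ρ 1) (z - p))
            (fun p _ => radialKernel_nonneg) hq
  · push Not at h
    rw [Finset.sum_eq_zero h, zero_pow two_ne_zero]
    exact Finset.sum_nonneg fun p _ => radialKernel_nonneg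

end CellDefect

section LayerField

lemma sq_integral_le {α : Type*} {m : MeasurableSpace α} {μ : Measure α} [IsFiniteMeasure μ]
    {f : α → ℝ} (hf : Integrable f μ) (hf2 : Integrable (fun x => f x ^ 2) μ) :
    (∫ x, f x ∂μ) ^ 2 ≤ μ.real Set.univ * ∫ x, f x ^ 2 ∂μ := by
  rcases eq_or_ne μ 0 with rfl | hμ
  · simp
  have : NeZero μ := ⟨hμ⟩
  have hpos : 0 < μ.real Set.univ := measureReal_univ_pos
  have hjensen := (even_two.convexOn_pow (𝕜 := ℝ)).map_average_le
    (continuous_pow 2).continuousOn isClosed_univ (by simp) hf hf2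
  rw [average_eq, average_eq, smul_eq_mul, smul_eq_mul, mul_pow, inv_pow] at hjensen
  calc (∫ x, f x ∂μ) ^ 2
      = μ.real Set.univ ^ 2 * ((μ.real Set.univ ^ 2)⁻¹ * (∫ x, f x ∂μ) ^ 2) := by
        field_simp
    _ ≤ μ.real Set.univ ^ 2 * ((μ.real Set.univ)⁻¹ * ∫ x, f x ^ 2 ∂μ) := by gcongr
    _ = μ.real Set.univ * ∫ x, f x ^ 2 ∂μ := by field_simp

variable {k : ℕ} {ℓ R : ℝ} {z w : ℂ} {A B : Set ℂ}

lemma norm_inv_le_near_add_far (hw : ‖w‖ < R) :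
    ‖w⁻¹‖ ≤ radialKernel 1 (Ioo 0 ℓ) w + radialKernel 1 (Ico ℓ R) w := by
  rcases lt_or_ge ‖w‖ ℓ with hnear | hfar
  · rw [norm_inv_eq_radialKernel hnear]
    exact le_add_of_nonneg_right radialKernel_nonneg
  · rw [radialKernel_of_mem (s := Ico ℓ R) ⟨hfar, hw⟩, norm_inv, pow_one]
    exact le_add_of_nonneg_left radialKernel_nonneg

lemma norm_setIntegral_inv_sub_sq_le (hℓ : 0 < ℓ) (hA : MeasurableSet A) (hAz : A ⊆ ball z R) :
    ‖∫ w in A, (z - w)⁻¹‖ ^ 2 ≤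
      2 * ((2 * π * ℓ) ^ 2 +
        volume.real A * ∫ w in A, radialKernel 2 (Ico ℓ R) (z - w)) := by
  have : IsFiniteMeasure (volume.restrict A) :=
    isFiniteMeasure_restrict.2 (ne_top_of_le_ne_top measure_ball_lt_top.ne (measure_mono hAz))
  have hnear := integrable_radialKernel_near ℓ z
  have hfar : IntegrableOn (fun w => radialKernel 1 (Ico ℓ R) (z - w)) A :=
    (integrable_radialKernel_succ measurableSet_Ico (by simp) z).integrableOn
  have hsplit : ‖∫ w in A, (z - w)⁻¹‖ ≤
      2 * π * ℓ + ∫ w in A, radialKernel 1 (Ico ℓ R) (z - w) := by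
    calc ‖∫ w in A, (z - w)⁻¹‖
        ≤ ∫ w in A, (radialKernel 1 (Ioo 0 ℓ) (z - w) + radialKernel 1 (Ico ℓ R) (z - w)) :=
          norm_integral_le_of_norm_le (hnear.integrableOn.add hfar)
            (ae_restrict_of_forall_mem hA fun w hw =>
              norm_inv_le_near_add_far (mem_ball_iff_norm'.1 (hAz hw)))
      _ ≤ _ := by
          rw [integral_add hnear.integrableOn hfar, ← integral_radialKernel_near hℓ.le z]
          exact add_le_add_left
            (setIntegral_le_integral hnear (Eventually.of_forall fun w => radialKernel_nonneg)) _
  have hfar2 : IntegrableOn (fun w => radialKernel 1 (Ico ℓ R) (z - w) ^ 2) A := by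
    simp only [radialKernel_sq, one_mul]
    exact (integrable_radialKernel_annulus hℓ R z).integrableOn
  have hcs := sq_integral_le hfar hfar2
  simp only [radialKernel_sq, one_mul, measureReal_restrict_apply_univ] at hcs
  calc ‖∫ w in A, (z - w)⁻¹‖ ^ 2
      ≤ (2 * π * ℓ + ∫ w in A, radialKernel 1 (Ico ℓ R) (z - w)) ^ 2 := by gcongr
    _ ≤ 2 * ((2 * π * ℓ) ^ 2 + (∫ w in A, radialKernel 1 (Ico ℓ R) (z - w)) ^ 2) := add_sq_le
    _ ≤ _ := by gcongr

lemma norm_radialKernel_Ico_le (hℓ : 0 < ℓ) : ‖radialKernel k (Ico ℓ R) w‖ ≤ (ℓ ^ k)⁻¹ := by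
  rw [Real.norm_of_nonneg radialKernel_nonneg]
  by_cases hw : ‖w‖ ∈ Ico ℓ R
  · rw [radialKernel_of_mem hw]
    gcongr
    exact hw.1
  · rw [radialKernel_of_notMem hw]
    positivity

lemma integrable_prod_radialKernel_Ico (μ ν : Measure ℂ) [IsFiniteMeasure μ] [IsFiniteMeasure ν]
    (hℓ : 0 < ℓ) :
    Integrable (Function.uncurry fun z w => radialKernel k (Ico ℓ R) (z - w)) (μ.prod ν) :=
  Integrable.mono' (integrable_const (ℓ ^ k)⁻¹)
    ((measurable_radialKernel measurableSet_Ico).comp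
      (measurable_fst.sub measurable_snd)).aestronglyMeasurable
    (Eventually.of_forall fun _ => norm_radialKernel_Ico_le hℓ)

lemma integrableOn_setIntegral_radialKernel (hℓ : 0 < ℓ) (hA : volume A ≠ ⊤) (hB : volume B ≠ ⊤) :
    IntegrableOn (fun z => ∫ w in A, radialKernel k (Ico ℓ R) (z - w)) B := by
  have := isFiniteMeasure_restrict.2 hA
  have := isFiniteMeasure_restrict.2 hB
  exact (integrable_prod_radialKernel_Ico _ _ hℓ).integral_prod_left

lemma setIntegral_setIntegral_radialKernel_le (hℓ : 0 < ℓ) (hR : ℓ ≤ R) (hA : volume A ≠ ⊤)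
    (hB : volume B ≠ ⊤) :
    ∫ z in B, ∫ w in A, radialKernel 2 (Ico ℓ R) (z - w) ≤
      volume.real A * (2 * π * Real.log (R / ℓ)) := by
  have := isFiniteMeasure_restrict.2 hA
  have := isFiniteMeasure_restrict.2 hB
  have hprod := integrable_prod_radialKernel_Ico (k := 2) (R := R)
    (volume.restrict B) (volume.restrict A) hℓ
  rw [integral_integral_swap hprod, ← smul_eq_mul, ← setIntegral_const]
  refine integral_mono hprod.integral_prod_right (integrableOn_const hA) fun w => ?_
  simp only [radialKernel_sub_comm _ w, ← integral_radialKernel_annulus hℓ hR w]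
  exact setIntegral_le_integral (integrable_radialKernel_annulus hℓ R w)
    (Eventually.of_forall fun z => radialKernel_nonneg)

end LayerField

section Deviation

/-- The field of unit vortices at the points of `S`, as a complex function: it is the conjugate of
the gradient of `∑ p ∈ S, log ‖z - p‖`. -/
def vortexField (S : Finset ℂ) (z : ℂ) : ℂ := ∑ p ∈ S, (z - p)⁻¹

/-- The difference between the field of the vortices in `S` and the field of the uniform
distribution on the unit disc with one vortex per cell of area `ℓ ^ 2`. -/
def deviation (ℓ : ℝ) (S : Finset ℂ) (z : ℂ) : ℂ :=
  vortexField S z - (π / ℓ ^ 2 : ℝ) * conj z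

/-- The unit disc with the discs of radius `ρ` around the points of `S` removed. -/
def perforatedDisc (ρ : ℝ) (S : Finset ℂ) : Set ℂ := ball 0 1 \ ⋃ p ∈ S, ball p ρ

/-- A function whose integral over the unit disc bounds the energy of the deviation field outside
discs of radius `ρ` around the vortices. In the constant, `592 = 4 * (12 ^ 2 + 2 ^ 2)`, where `12`
comes from `integral_defectKernel` and `2` from the part of the boundary layer within `ℓ` of `z`. -/
def deviationMajorant (ℓ ρ : ℝ) (S : Finset ℂ) (z : ℂ) : ℝ :=
  592 * π ^ 2 / ℓ ^ 2 + 4 * ∑ p ∈ S, radialKernel 2 (Ico ρ 1) (z - p) +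
    4 / ℓ ^ 4 * volume.real (boundaryLayer ℓ S) *
      ∫ w in boundaryLayer ℓ S, radialKernel 2 (Ico ℓ 2) (z - w)

variable {ℓ ρ : ℝ} {S : Finset ℂ} {z p : ℂ}

lemma measurableSet_perforatedDisc (ρ : ℝ) (S : Finset ℂ) : MeasurableSet (perforatedDisc ρ S) :=
  measurableSet_ball.diff (S.measurableSet_biUnion fun _ _ => measurableSet_ball)

lemma perforatedDisc_subset_ball : perforatedDisc ρ S ⊆ ball 0 1 := Set.sdiff_subset

lemma le_norm_sub_of_mem_perforatedDisc (hz : z ∈ perforatedDisc ρ S) (hp : p ∈ S) :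
    ρ ≤ ‖z - p‖ := by
  by_contra! hlt
  exact hz.2 (Set.mem_biUnion hp (mem_ball_iff_norm.2 hlt))

lemma deviationMajorant_nonneg : 0 ≤ deviationMajorant ℓ ρ S z := by
  have hsum : 0 ≤ ∑ p ∈ S, radialKernel 2 (Ico ρ 1) (z - p) :=
    Finset.sum_nonneg fun _ _ => radialKernel_nonneg
  have hlayer : 0 ≤ ∫ w in boundaryLayer ℓ S, radialKernel 2 (Ico ℓ 2) (z - w) :=
    integral_nonneg fun _ => radialKernel_nonneg
  unfold deviationMajorant
  positivity

lemma integrable_radialKernel_sub (hρ : 0 < ρ) (p : ℂ) :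
    Integrable fun z => radialKernel 2 (Ico ρ 1) (z - p) := by
  simpa only [radialKernel_sub_comm p] using integrable_radialKernel_annulus hρ 1 p

lemma integrable_sum_radialKernel (hρ : 0 < ρ) (S : Finset ℂ) :
    Integrable fun z => ∑ p ∈ S, radialKernel 2 (Ico ρ 1) (z - p) :=
  integrable_finsetSum S fun p _ => integrable_radialKernel_sub hρ p

lemma integral_sum_radialKernel (hρ : 0 < ρ) (hρ1 : ρ ≤ 1) (S : Finset ℂ) :
    ∫ z, ∑ p ∈ S, radialKernel 2 (Ico ρ 1) (z - p) = S.card * (2 * π * Real.log (1 / ρ)) := by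
  rw [integral_finsetSum S fun p _ => integrable_radialKernel_sub hρ p, ← nsmul_eq_mul]
  refine Finset.sum_eq_card_nsmul fun p _ => ?_
  simpa only [radialKernel_sub_comm p] using integral_radialKernel_annulus hρ hρ1 p

namespace IsDiscTiling

lemma deviation_eq (hT : IsDiscTiling ℓ S) (hz : ‖z‖ < 1) :
    deviation ℓ S z = ∑ p ∈ S, cellDefect ℓ z p -
      ((ℓ : ℂ) ^ 2)⁻¹ * ∫ w in boundaryLayer ℓ S, (z - w)⁻¹ := by
  have hnewton := setIntegral_ball_inv_sub hz
  rw [hT.setIntegral_ball_eq_add (integrableOn_inv_sub_ball z 1)] at hnewton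
  have hunif : ((π / ℓ ^ 2 : ℝ) : ℂ) * conj z = ((ℓ : ℂ) ^ 2)⁻¹ * (π * conj z) := by
    push_cast
    ring
  simp only [deviation, vortexField, cellDefect, setAverage_cell_eq hT.side_pos]
  rw [hunif, ← hnewton, Finset.sum_sub_distrib, mul_add, Finset.mul_sum, sub_sub]

lemma norm_deviation_sq_le (hT : IsDiscTiling ℓ S) (hz : z ∈ perforatedDisc ρ S) :
    ‖deviation ℓ S z‖ ^ 2 ≤ deviationMajorant ℓ ρ S z := by
  have hℓ := hT.side_pos
  have hz1 : ‖z‖ < 1 := mem_ball_zero_iff.1 (perforatedDisc_subset_ball hz)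
  have hcells : ‖∑ p ∈ S, cellDefect ℓ z p‖ ^ 2 ≤
      2 * ((12 * π / ℓ) ^ 2 + ∑ p ∈ S, radialKernel 2 (Ico ρ 1) (z - p)) := by
    refine (pow_le_pow_left₀ (norm_nonneg _) (hT.norm_sum_cellDefect_le z) 2).trans ?_
    refine add_sq_le.trans ?_
    gcongr
    exact hT.sum_radialKernel_sq_le fun p hp => le_norm_sub_of_mem_perforatedDisc hz hp
  have hlayer := norm_setIntegral_inv_sub_sq_le hℓ (measurableSet_boundaryLayer ℓ S)
    (z := z) (R := 2) ((boundaryLayer_subset_ball ℓ S).trans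
      (Metric.ball_subset_ball' (by rw [dist_zero_left]; linarith)))
  have hinv : ‖((ℓ : ℂ) ^ 2)⁻¹‖ = (ℓ ^ 2)⁻¹ := by
    rw [norm_inv, norm_pow, Complex.norm_real, Real.norm_of_nonneg hℓ.le]
  calc ‖deviation ℓ S z‖ ^ 2
      ≤ (‖∑ p ∈ S, cellDefect ℓ z p‖ +
          (ℓ ^ 2)⁻¹ * ‖∫ w in boundaryLayer ℓ S, (z - w)⁻¹‖) ^ 2 := by
        rw [hT.deviation_eq hz1, ← hinv, ← norm_mul]
        gcongr
        exact norm_sub_le _ _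
    _ ≤ 2 * (‖∑ p ∈ S, cellDefect ℓ z p‖ ^ 2 +
          ((ℓ ^ 2)⁻¹) ^ 2 * ‖∫ w in boundaryLayer ℓ S, (z - w)⁻¹‖ ^ 2) := by
        rw [← mul_pow]
        exact add_sq_le
    _ ≤ 2 * (2 * ((12 * π / ℓ) ^ 2 + ∑ p ∈ S, radialKernel 2 (Ico ρ 1) (z - p)) +
          ((ℓ ^ 2)⁻¹) ^ 2 * (2 * ((2 * π * ℓ) ^ 2 + volume.real (boundaryLayer ℓ S) *
            ∫ w in boundaryLayer ℓ S, radialKernel 2 (Ico ℓ 2) (z - w)))) := by gcongr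
    _ = deviationMajorant ℓ ρ S z := by
        unfold deviationMajorant
        field_simp
        ring

lemma setIntegral_sum_radialKernel_le (hT : IsDiscTiling ℓ S) (hρ : 0 < ρ) (hρ1 : ρ ≤ 1) :
    ∫ z in ball 0 1, ∑ p ∈ S, radialKernel 2 (Ico ρ 1) (z - p) ≤
      2 * π ^ 2 * Real.log (1 / ρ) / ℓ ^ 2 := by
  have hℓ := hT.side_pos
  have hlog : 0 ≤ Real.log (1 / ρ) := Real.log_nonneg ((one_le_div hρ).2 hρ1)
  calc ∫ z in ball 0 1, ∑ p ∈ S, radialKernel 2 (Ico ρ 1) (z - p)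
      ≤ S.card * (2 * π * Real.log (1 / ρ)) := by
        rw [← integral_sum_radialKernel hρ hρ1 S]
        exact setIntegral_le_integral (integrable_sum_radialKernel hρ S)
          (Eventually.of_forall fun z => Finset.sum_nonneg fun _ _ => radialKernel_nonneg)
    _ = S.card * ℓ ^ 2 * (2 * π * Real.log (1 / ρ)) / ℓ ^ 2 := by field_simp
    _ ≤ π * (2 * π * Real.log (1 / ρ)) / ℓ ^ 2 := by
        gcongr
        exact hT.card_mul_sq_le
    _ = 2 * π ^ 2 * Real.log (1 / ρ) / ℓ ^ 2 := by ring

lemma volume_mul_setIntegral_boundaryLayer_le (hT : IsDiscTiling ℓ S) :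
    volume.real (boundaryLayer ℓ S) *
      ∫ z in ball 0 1, ∫ w in boundaryLayer ℓ S, radialKernel 2 (Ico ℓ 2) (z - w) ≤
        128 * π ^ 3 * ℓ ^ 2 * Real.log (2 / ℓ) := by
  have hℓ := hT.side_pos
  have hℓ2 : ℓ ≤ 2 := by linarith [hT.side_lt]
  have hlog : 0 ≤ Real.log (2 / ℓ) := Real.log_nonneg ((one_le_div hℓ).2 hℓ2)
  have hvol := hT.volume_real_boundaryLayer_le
  calc volume.real (boundaryLayer ℓ S) *
        ∫ z in ball 0 1, ∫ w in boundaryLayer ℓ S, radialKernel 2 (Ico ℓ 2) (z - w)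
      ≤ volume.real (boundaryLayer ℓ S) *
          (volume.real (boundaryLayer ℓ S) * (2 * π * Real.log (2 / ℓ))) := by
        gcongr
        exact setIntegral_setIntegral_radialKernel_le hℓ hℓ2 (volume_boundaryLayer_ne_top ℓ S)
          measure_ball_lt_top.ne
    _ ≤ 8 * π * ℓ * (8 * π * ℓ * (2 * π * Real.log (2 / ℓ))) := by gcongr
    _ = 128 * π ^ 3 * ℓ ^ 2 * Real.log (2 / ℓ) := by ring

lemma integrableOn_setIntegral_boundaryLayer (hT : IsDiscTiling ℓ S) :
    IntegrableOn (fun z => ∫ w in boundaryLayer ℓ S, radialKernel 2 (Ico ℓ 2) (z - w))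
      (ball 0 1) :=
  integrableOn_setIntegral_radialKernel hT.side_pos (volume_boundaryLayer_ne_top ℓ S)
    measure_ball_lt_top.ne

lemma integrableOn_deviationMajorant (hT : IsDiscTiling ℓ S) (hρ : 0 < ρ) :
    IntegrableOn (deviationMajorant ℓ ρ S) (ball 0 1) :=
  ((integrableOn_const measure_ball_lt_top.ne).add
    ((integrable_sum_radialKernel hρ S).integrableOn.const_mul 4)).add
      (hT.integrableOn_setIntegral_boundaryLayer.const_mul _)

lemma setIntegral_deviationMajorant_le (hT : IsDiscTiling ℓ S) (hρ : 0 < ρ) (hρ1 : ρ ≤ 1) :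
    ∫ z in ball 0 1, deviationMajorant ℓ ρ S z ≤
      (592 * π ^ 3 + 8 * π ^ 2 * Real.log (1 / ρ) + 512 * π ^ 3 * Real.log (2 / ℓ)) / ℓ ^ 2 := by
  have hℓ := hT.side_pos
  have hconst : IntegrableOn (fun _ => 592 * π ^ 2 / ℓ ^ 2) (ball (0 : ℂ) 1) :=
    integrableOn_const measure_ball_lt_top.ne
  have hcores := (integrable_sum_radialKernel hρ S).integrableOn (s := ball 0 1)
  have hsum : IntegrableOn (fun z => 592 * π ^ 2 / ℓ ^ 2 +
      4 * ∑ p ∈ S, radialKernel 2 (Ico ρ 1) (z - p)) (ball 0 1) := hconst.add (hcores.const_mul 4)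
  have hcores_le := hT.setIntegral_sum_radialKernel_le hρ hρ1
  have hlayer_le := hT.volume_mul_setIntegral_boundaryLayer_le
  unfold deviationMajorant
  rw [integral_add hsum (hT.integrableOn_setIntegral_boundaryLayer.const_mul _),
    integral_add hconst (hcores.const_mul 4), setIntegral_const,
    volume_real_ball_complex 0 zero_le_one, integral_const_mul, integral_const_mul,
    mul_assoc _ (volume.real _)]
  calc _ ≤ (π * 1 ^ 2) • (592 * π ^ 2 / ℓ ^ 2) + 4 * (2 * π ^ 2 * Real.log (1 / ρ) / ℓ ^ 2) +
        4 / ℓ ^ 4 * (128 * π ^ 3 * ℓ ^ 2 * Real.log (2 / ℓ)) := by gcongr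
    _ = _ := by
        rw [smul_eq_mul]
        field_simp
        ring

end IsDiscTiling

end Deviation

section Moments

variable {ℓ : ℝ} {S : Finset ℂ}

lemma setIntegral_cell_norm_sq (hℓ : 0 < ℓ) (p : ℂ) :
    ∫ w in cell ℓ p, ‖w‖ ^ 2 = ℓ ^ 2 * ‖p‖ ^ 2 + ∫ w in cell ℓ p, ‖w - p‖ ^ 2 := by
  have hexpand (w : ℂ) :
      ‖w‖ ^ 2 = ((‖p‖ : ℂ) ^ 2 + 2 * conj p * (w - p)).re + ‖w - p‖ ^ 2 := by
    rw [← Complex.mul_conj']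
    simp only [Complex.sq_norm, Complex.normSq_apply, Complex.add_re, Complex.mul_re,
      Complex.mul_im, Complex.conj_re, Complex.conj_im, Complex.sub_re, Complex.sub_im,
      Complex.re_ofNat, Complex.im_ofNat]
    ring
  have hlin : IntegrableOn (fun w => (‖p‖ : ℂ) ^ 2 + 2 * conj p * (w - p)) (cell ℓ p) :=
    integrableOn_cell_of_continuous (by fun_prop) hℓ p
  have hsq : IntegrableOn (fun w => ‖w - p‖ ^ 2) (cell ℓ p) :=
    integrableOn_cell_of_continuous (by fun_prop) hℓ p
  have hre : ∫ w in cell ℓ p, ((‖p‖ : ℂ) ^ 2 + 2 * conj p * (w - p)).re = ℓ ^ 2 * ‖p‖ ^ 2 := by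
    refine (Complex.reCLM.integral_comp_comm hlin).trans ?_
    rw [setIntegral_cell_linear hℓ, Complex.reCLM_apply]
    norm_cast
  rw [← hre]
  exact (integral_congr_ae (Eventually.of_forall hexpand)).trans (integral_add hlin.re hsq)

lemma setIntegral_cell_norm_sub_sq_le (hℓ : 0 < ℓ) (p : ℂ) :
    ∫ w in cell ℓ p, ‖w - p‖ ^ 2 ≤ ℓ ^ 4 / 2 := by
  calc ∫ w in cell ℓ p, ‖w - p‖ ^ 2 ≤ ∫ _ in cell ℓ p, ℓ ^ 2 / 2 :=
        setIntegral_mono_on (integrableOn_cell_of_continuous (by fun_prop) hℓ p)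
          (integrableOn_cell_of_continuous continuous_const hℓ p) (measurableSet_cell ℓ p)
          fun w hw => norm_sub_sq_le_of_mem_cell hw
    _ = ℓ ^ 4 / 2 := by
        rw [setIntegral_const, volume_real_cell hℓ, smul_eq_mul]
        ring

namespace IsDiscTiling

lemma sum_one_sub_norm_sq_eq (hT : IsDiscTiling ℓ S) :
    ℓ ^ 2 * ∑ p ∈ S, (1 - ‖p‖ ^ 2) - π / 2 =
      ∑ p ∈ S, (∫ w in cell ℓ p, ‖w - p‖ ^ 2) -
        ∫ w in boundaryLayer ℓ S, (1 - ‖w‖ ^ 2) := by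
  have hℓ := hT.side_pos
  have hone : IntegrableOn (fun _ => (1 : ℝ)) (ball (0 : ℂ) 1) :=
    integrableOn_const measure_ball_lt_top.ne
  have hball : ∫ w in ball (0 : ℂ) 1, (1 - ‖w‖ ^ 2) = π / 2 := by
    rw [integral_sub hone (integrableOn_ball_norm_sq 1), setIntegral_ball_norm_sq zero_le_one,
      setIntegral_const, volume_real_ball_complex 0 zero_le_one, smul_eq_mul]
    ring
  have hcell (p : ℂ) : ∫ w in cell ℓ p, (1 - ‖w‖ ^ 2) =
      ℓ ^ 2 * (1 - ‖p‖ ^ 2) - ∫ w in cell ℓ p, ‖w - p‖ ^ 2 := by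
    rw [integral_sub (integrableOn_cell_of_continuous continuous_const hℓ p)
      (integrableOn_cell_of_continuous (by fun_prop) hℓ p), setIntegral_cell_norm_sq hℓ,
      setIntegral_const, volume_real_cell hℓ, smul_eq_mul]
    ring
  have hsplit := hT.setIntegral_ball_eq_add (hone.sub (integrableOn_ball_norm_sq 1))
  simp only [Pi.sub_apply, hball, hcell, Finset.sum_sub_distrib, ← Finset.mul_sum] at hsplit
  rw [Finset.sum_sub_distrib, hsplit]
  ring

lemma setIntegral_boundaryLayer_one_sub_norm_sq_le (hT : IsDiscTiling ℓ S) :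
    ∫ w in boundaryLayer ℓ S, (1 - ‖w‖ ^ 2) ≤ 64 * π * ℓ ^ 2 := by
  have hℓ := hT.side_pos
  have hfin := volume_boundaryLayer_ne_top ℓ S
  calc ∫ w in boundaryLayer ℓ S, (1 - ‖w‖ ^ 2) ≤ ∫ _ in boundaryLayer ℓ S, 8 * ℓ := by
        refine setIntegral_mono_on ((integrableOn_const hfin).sub
          ((integrableOn_ball_norm_sq 1).mono_set (boundaryLayer_subset_ball ℓ S)))
          (integrableOn_const hfin) (measurableSet_boundaryLayer ℓ S) fun w hw => ?_
        nlinarith [hT.le_norm_of_mem_boundaryLayer hw, hT.side_lt]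
    _ = volume.real (boundaryLayer ℓ S) * (8 * ℓ) := by rw [setIntegral_const, smul_eq_mul]
    _ ≤ 8 * π * ℓ * (8 * ℓ) := by
        gcongr
        exact hT.volume_real_boundaryLayer_le
    _ = 64 * π * ℓ ^ 2 := by ring

lemma abs_sum_one_sub_norm_sq_sub_le (hT : IsDiscTiling ℓ S) :
    |ℓ ^ 2 * ∑ p ∈ S, (1 - ‖p‖ ^ 2) - π / 2| ≤ 64 * π * ℓ ^ 2 := by
  have hcells : ∑ p ∈ S, (∫ w in cell ℓ p, ‖w - p‖ ^ 2) ≤ 64 * π * ℓ ^ 2 := by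
    calc ∑ p ∈ S, (∫ w in cell ℓ p, ‖w - p‖ ^ 2) ≤ S.card • (ℓ ^ 4 / 2) :=
          Finset.sum_le_card_nsmul _ _ _ fun p _ => setIntegral_cell_norm_sub_sq_le hT.side_pos p
      _ = S.card * ℓ ^ 2 * (ℓ ^ 2 / 2) := by rw [nsmul_eq_mul]; ring
      _ ≤ π * (ℓ ^ 2 / 2) := by gcongr; exact hT.card_mul_sq_le
      _ ≤ 64 * π * ℓ ^ 2 := by nlinarith [mul_nonneg pi_pos.le (sq_nonneg ℓ)]
  have hcells0 : 0 ≤ ∑ p ∈ S, (∫ w in cell ℓ p, ‖w - p‖ ^ 2) :=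
    Finset.sum_nonneg fun p _ => integral_nonneg fun w => sq_nonneg _
  have hlayer0 : 0 ≤ ∫ w in boundaryLayer ℓ S, (1 - ‖w‖ ^ 2) :=
    setIntegral_nonneg (measurableSet_boundaryLayer ℓ S) fun w hw => by
      nlinarith [norm_nonneg w, mem_ball_zero_iff.1 (boundaryLayer_subset_ball ℓ S hw)]
  rw [hT.sum_one_sub_norm_sq_eq, abs_le]
  constructor <;> linarith [hT.setIntegral_boundaryLayer_one_sub_norm_sq_le]

end IsDiscTiling

end Moments

section CrossTerm

variable {ℓ ρ : ℝ} {S : Finset ℂ} {z : ℂ} {A : Set ℂ}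

lemma mul_deviation_eq (ℓ : ℝ) (S : Finset ℂ) (z : ℂ) :
    z * deviation ℓ S z = ∑ p ∈ S, z * (z - p)⁻¹ - (π / ℓ ^ 2 * ‖z‖ ^ 2 : ℝ) := by
  have hconj : z * ((π / ℓ ^ 2 : ℝ) * conj z) = (π / ℓ ^ 2 * ‖z‖ ^ 2 : ℝ) := by
    rw [mul_left_comm, Complex.mul_conj']
    norm_cast
  rw [deviation, vortexField, mul_sub, Finset.mul_sum, hconj]

lemma integrableOn_mul_deviation (ℓ : ℝ) (S : Finset ℂ) :
    IntegrableOn (fun z => z * deviation ℓ S z) (ball 0 1) := by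
  simp_rw [mul_deviation_eq]
  exact (integrable_finsetSum S fun p _ => integrableOn_mul_inv_sub p 1).sub
    ((integrableOn_ball_norm_sq 1).const_mul _).ofReal

lemma norm_inv_le_near_add_inv (hρ : 0 < ρ) (w : ℂ) :
    ‖w⁻¹‖ ≤ radialKernel 1 (Ioo 0 ρ) w + ρ⁻¹ := by
  rcases lt_or_ge ‖w‖ ρ with hnear | hfar
  · rw [norm_inv_eq_radialKernel hnear]
    exact le_add_of_nonneg_right (inv_nonneg.2 hρ.le)
  · rw [norm_inv]
    exact le_add_of_nonneg_of_le radialKernel_nonneg (inv_anti₀ hρ hfar)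

lemma norm_mul_deviation_le (hρ : 0 < ρ) (hz : ‖z‖ < 1) :
    ‖z * deviation ℓ S z‖ ≤
      ∑ p ∈ S, (radialKernel 1 (Ioo 0 ρ) (p - z) + ρ⁻¹) + π / ℓ ^ 2 := by
  have hcore (p : ℂ) : ‖z * (z - p)⁻¹‖ ≤ radialKernel 1 (Ioo 0 ρ) (p - z) + ρ⁻¹ := by
    rw [norm_mul, norm_inv, norm_sub_rev, ← norm_inv]
    exact (mul_le_of_le_one_left (norm_nonneg _) hz.le).trans (norm_inv_le_near_add_inv hρ _)
  have hunif : ‖((π / ℓ ^ 2 * ‖z‖ ^ 2 : ℝ) : ℂ)‖ ≤ π / ℓ ^ 2 := by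
    rw [Complex.norm_real, Real.norm_of_nonneg (by positivity)]
    exact mul_le_of_le_one_right (by positivity) (pow_le_one₀ (norm_nonneg z) hz.le)
  rw [mul_deviation_eq]
  exact (norm_sub_le _ _).trans (add_le_add (norm_sum_le_of_le S fun p _ => hcore p) hunif)

lemma norm_setIntegral_mul_deviation_le (hρ : 0 < ρ) (hA : MeasurableSet A) (hA1 : A ⊆ ball 0 1) :
    ‖∫ z in A, z * deviation ℓ S z‖ ≤
      S.card * (2 * π * ρ + volume.real A * ρ⁻¹) + volume.real A * (π / ℓ ^ 2) := by
  have hfin : volume A ≠ ⊤ := ne_top_of_le_ne_top measure_ball_lt_top.ne (measure_mono hA1)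
  have hnear (p : ℂ) := integrable_radialKernel_near ρ p
  have hcore (p : ℂ) :
      IntegrableOn (fun z => radialKernel 1 (Ioo 0 ρ) (p - z) + ρ⁻¹) A :=
    (hnear p).integrableOn.add (integrableOn_const hfin)
  have hcore_le (p : ℂ) : ∫ z in A, (radialKernel 1 (Ioo 0 ρ) (p - z) + ρ⁻¹) ≤
      2 * π * ρ + volume.real A * ρ⁻¹ := by
    rw [integral_add (hnear p).integrableOn (integrableOn_const hfin), setIntegral_const,
      smul_eq_mul, ← integral_radialKernel_near hρ.le p]
    exact add_le_add_left
      (setIntegral_le_integral (hnear p) (Eventually.of_forall fun z => radialKernel_nonneg)) _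
  calc ‖∫ z in A, z * deviation ℓ S z‖
      ≤ ∫ z in A, (∑ p ∈ S, (radialKernel 1 (Ioo 0 ρ) (p - z) + ρ⁻¹) + π / ℓ ^ 2) :=
        norm_integral_le_of_norm_le
          ((integrable_finsetSum S fun p _ => hcore p).add (integrableOn_const hfin))
          (ae_restrict_of_forall_mem hA fun z hz =>
            norm_mul_deviation_le hρ (mem_ball_zero_iff.1 (hA1 hz)))
    _ = ∑ p ∈ S, (∫ z in A, (radialKernel 1 (Ioo 0 ρ) (p - z) + ρ⁻¹)) +
          volume.real A * (π / ℓ ^ 2) := by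
        rw [integral_add (integrable_finsetSum S fun p _ => hcore p) (integrableOn_const hfin),
          integral_finsetSum S fun p _ => hcore p, setIntegral_const, smul_eq_mul]
    _ ≤ _ := by
        rw [← nsmul_eq_mul]
        gcongr
        exact Finset.sum_le_card_nsmul _ _ _ fun p _ => hcore_le p

lemma volume_real_biUnion_ball_le (hρ : 0 ≤ ρ) (S : Finset ℂ) :
    volume.real (⋃ p ∈ S, ball p ρ) ≤ S.card * (π * ρ ^ 2) := by
  refine (measureReal_biUnion_finset_le S _).trans (Eq.le ?_)
  simp_rw [volume_real_ball_complex _ hρ]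
  rw [Finset.sum_const, nsmul_eq_mul]

namespace IsDiscTiling

lemma setIntegral_ball_mul_deviation (hT : IsDiscTiling ℓ S) :
    ∫ z in ball 0 1, z * deviation ℓ S z =
      (π / ℓ ^ 2 * (ℓ ^ 2 * ∑ p ∈ S, (1 - ‖p‖ ^ 2) - π / 2) : ℝ) := by
  have hℓ := hT.side_pos.ne'
  have hmoment (p : ℂ) (hp : p ∈ S) := setIntegral_ball_mul_inv_sub (hT.norm_center_lt hp)
  have hunif : IntegrableOn (fun z : ℂ => ((π / ℓ ^ 2 * ‖z‖ ^ 2 : ℝ) : ℂ)) (ball 0 1) :=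
    ((integrableOn_ball_norm_sq 1).const_mul _).ofReal
  simp_rw [mul_deviation_eq]
  rw [integral_sub (integrable_finsetSum S fun p _ => integrableOn_mul_inv_sub p 1) hunif,
    integral_finsetSum S fun p _ => integrableOn_mul_inv_sub p 1, Finset.sum_congr rfl hmoment,
    integral_complex_ofReal, integral_const_mul, setIntegral_ball_norm_sq zero_le_one,
    ← Complex.ofReal_sum, ← Complex.ofReal_sub, ← Finset.mul_sum]
  congr 1
  field_simp

lemma norm_setIntegral_ball_mul_deviation_le (hT : IsDiscTiling ℓ S) :
    ‖∫ z in ball 0 1, z * deviation ℓ S z‖ ≤ 64 * π ^ 2 := by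
  have hℓ := hT.side_pos
  rw [hT.setIntegral_ball_mul_deviation, Complex.norm_real, norm_mul,
    Real.norm_of_nonneg (by positivity)]
  calc π / ℓ ^ 2 * |ℓ ^ 2 * ∑ p ∈ S, (1 - ‖p‖ ^ 2) - π / 2|
      ≤ π / ℓ ^ 2 * (64 * π * ℓ ^ 2) := by
        gcongr
        exact hT.abs_sum_one_sub_norm_sq_sub_le
    _ = 64 * π ^ 2 := by field_simp

lemma norm_setIntegral_cores_mul_deviation_le (hT : IsDiscTiling ℓ S) (hρ : 0 < ρ)
    (hρℓ : ρ ≤ ℓ ^ 4) :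
    ‖∫ z in ball 0 1 ∩ ⋃ p ∈ S, ball p ρ, z * deviation ℓ S z‖ ≤ 2 * π ^ 2 + 2 * π ^ 3 := by
  have hℓ := hT.side_pos
  have hℓ1 : ℓ ≤ 1 := by linarith [hT.side_lt]
  have hρ1 : ρ ≤ 1 := hρℓ.trans (pow_le_one₀ hℓ.le hℓ1)
  have hN : (S.card : ℝ) ≤ π / ℓ ^ 2 := (le_div_iff₀ (by positivity)).2 hT.card_mul_sq_le
  have hvol : volume.real (ball (0 : ℂ) 1 ∩ ⋃ p ∈ S, ball p ρ) ≤ π / ℓ ^ 2 * (π * ρ ^ 2) := by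
    refine ((measureReal_mono Set.inter_subset_right ?_).trans
      (volume_real_biUnion_ball_le hρ.le S)).trans (by gcongr)
    exact (measure_biUnion_lt_top S.finite_toSet fun _ _ => measure_ball_lt_top).ne
  have hcores : MeasurableSet (⋃ p ∈ S, ball p ρ) :=
    S.measurableSet_biUnion fun _ _ => measurableSet_ball
  calc _ ≤ _ := norm_setIntegral_mul_deviation_le hρ (measurableSet_ball.inter hcores)
        Set.inter_subset_left
    _ ≤ π / ℓ ^ 2 * (2 * π * ρ + π / ℓ ^ 2 * (π * ρ ^ 2) * ρ⁻¹) +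
          π / ℓ ^ 2 * (π * ρ ^ 2) * (π / ℓ ^ 2) := by gcongr
    _ = 2 * π ^ 2 * ρ / ℓ ^ 2 + π ^ 3 * (1 + ρ) * ρ / ℓ ^ 4 := by field_simp; ring
    _ ≤ 2 * π ^ 2 * ℓ ^ 4 / ℓ ^ 2 + π ^ 3 * (1 + 1) * ℓ ^ 4 / ℓ ^ 4 := by gcongr
    _ = 2 * π ^ 2 * ℓ ^ 2 + 2 * π ^ 3 := by field_simp; ring
    _ ≤ 2 * π ^ 2 + 2 * π ^ 3 :=
        add_le_add_left (mul_le_of_le_one_right (by positivity) (pow_le_one₀ hℓ.le hℓ1)) _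

lemma norm_setIntegral_perforatedDisc_mul_deviation_le (hT : IsDiscTiling ℓ S) (hρ : 0 < ρ)
    (hρℓ : ρ ≤ ℓ ^ 4) :
    ‖∫ z in perforatedDisc ρ S, z * deviation ℓ S z‖ ≤ 66 * π ^ 2 + 2 * π ^ 3 := by
  have hsplit := integral_inter_add_sdiff
    (S.measurableSet_biUnion fun p _ => measurableSet_ball (x := p) (ε := ρ))
    (integrableOn_mul_deviation ℓ S)
  rw [perforatedDisc, ← add_sub_cancel_left (∫ z in ball 0 1 ∩ ⋃ p ∈ S, ball p ρ, _)
    (∫ z in ball 0 1 \ ⋃ p ∈ S, ball p ρ, _), hsplit]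
  refine (norm_sub_le _ _).trans ?_
  linarith [hT.norm_setIntegral_ball_mul_deviation_le,
    hT.norm_setIntegral_cores_mul_deviation_le hρ hρℓ]

end IsDiscTiling

end CrossTerm

section Energy

variable {ℓ ρ ρ' : ℝ} {S : Finset ℂ} {z : ℂ}

lemma perforatedDisc_subset_perforatedDisc (h : ρ' ≤ ρ) (S : Finset ℂ) :
    perforatedDisc ρ S ⊆ perforatedDisc ρ' S :=
  Set.sdiff_subset_sdiff_right
    (Set.iUnion₂_mono fun _ _ => Metric.ball_subset_ball h)

lemma measurable_vortexField (S : Finset ℂ) : Measurable (vortexField S) :=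
  S.measurable_fun_sum fun p _ => (measurable_id.sub_const p).inv

lemma norm_vortexField_le (hρ : 0 < ρ) (hz : z ∈ perforatedDisc ρ S) :
    ‖vortexField S z‖ ≤ S.card * ρ⁻¹ := by
  rw [← nsmul_eq_mul]
  refine (norm_sum_le _ _).trans (Finset.sum_le_card_nsmul _ _ _ fun p hp => ?_)
  rw [norm_inv]
  exact inv_anti₀ hρ (le_norm_sub_of_mem_perforatedDisc hz hp)

lemma integrableOn_norm_vortexField_sub_sq (hρ : 0 < ρ) (S : Finset ℂ) (a : ℝ) :
    IntegrableOn (fun z => ‖vortexField S z - a * conj z‖ ^ 2) (perforatedDisc ρ S) := by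
  have hmeas : Measurable fun z => ‖vortexField S z - a * conj z‖ ^ 2 :=
    (((measurable_vortexField S).sub (by fun_prop)).norm).pow_const 2
  refine Measure.integrableOn_of_bounded (M := (S.card * ρ⁻¹ + |a|) ^ 2)
    (ne_top_of_le_ne_top measure_ball_lt_top.ne (measure_mono perforatedDisc_subset_ball))
    hmeas.aestronglyMeasurable
    (ae_restrict_of_forall_mem (measurableSet_perforatedDisc ρ S) fun z hz => ?_)
  have hz1 : ‖z‖ < 1 := mem_ball_zero_iff.1 (perforatedDisc_subset_ball hz)
  have hrot : ‖(a : ℂ) * conj z‖ ≤ |a| := by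
    rw [norm_mul, Complex.norm_real, RCLike.norm_conj]
    exact mul_le_of_le_one_right (abs_nonneg a) hz1.le
  rw [norm_pow, norm_norm]
  gcongr
  exact (norm_sub_le _ _).trans (add_le_add (norm_vortexField_le hρ hz) hrot)

lemma setIntegral_norm_vortexField_sub_sq_anti (hρ' : 0 < ρ') (h : ρ' ≤ ρ) (S : Finset ℂ)
    (a : ℝ) :
    ∫ z in perforatedDisc ρ S, ‖vortexField S z - a * conj z‖ ^ 2 ≤
      ∫ z in perforatedDisc ρ' S, ‖vortexField S z - a * conj z‖ ^ 2 :=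
  setIntegral_mono_set (integrableOn_norm_vortexField_sub_sq hρ' S a)
    (Eventually.of_forall fun _ => sq_nonneg _)
    (perforatedDisc_subset_perforatedDisc h S).eventuallyLE

lemma norm_vortexField_sub_sq (ℓ a : ℝ) (S : Finset ℂ) (z : ℂ) :
    ‖vortexField S z - a * conj z‖ ^ 2 =
      (π / ℓ ^ 2 - a) ^ 2 * ‖z‖ ^ 2 + 2 * (π / ℓ ^ 2 - a) * (z * deviation ℓ S z).re +
        ‖deviation ℓ S z‖ ^ 2 := by
  have hsplit : vortexField S z - a * conj z =
      (π / ℓ ^ 2 - a : ℝ) * conj z + deviation ℓ S z := by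
    rw [deviation]
    push_cast
    ring
  rw [hsplit]
  simp only [Complex.sq_norm, Complex.normSq_apply, Complex.mul_re, Complex.mul_im,
    Complex.add_re, Complex.add_im, Complex.conj_re, Complex.conj_im, Complex.ofReal_re,
    Complex.ofReal_im]
  ring

namespace IsDiscTiling

lemma setIntegral_norm_vortexField_sub_sq_le_add (hT : IsDiscTiling ℓ S) (hρ : 0 < ρ) (a : ℝ) :
    ∫ z in perforatedDisc ρ S, ‖vortexField S z - a * conj z‖ ^ 2 ≤
      (π / ℓ ^ 2 - a) ^ 2 * (∫ z in perforatedDisc ρ S, ‖z‖ ^ 2) +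
        2 * (π / ℓ ^ 2 - a) * (∫ z in perforatedDisc ρ S, z * deviation ℓ S z).re +
          ∫ z in perforatedDisc ρ S, deviationMajorant ℓ ρ S z := by
  have hsub : perforatedDisc ρ S ⊆ ball 0 1 := perforatedDisc_subset_ball
  have hsq : IntegrableOn (fun z => (π / ℓ ^ 2 - a) ^ 2 * ‖z‖ ^ 2) (perforatedDisc ρ S) :=
    ((integrableOn_ball_norm_sq 1).mono_set hsub).const_mul _
  have hdev := (integrableOn_mul_deviation ℓ S).mono_set hsub
  have hcross : IntegrableOn (fun z => 2 * (π / ℓ ^ 2 - a) * (z * deviation ℓ S z).re)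
      (perforatedDisc ρ S) := hdev.re.const_mul _
  have hexact : IntegrableOn (fun z => (π / ℓ ^ 2 - a) ^ 2 * ‖z‖ ^ 2 +
      2 * (π / ℓ ^ 2 - a) * (z * deviation ℓ S z).re) (perforatedDisc ρ S) := hsq.add hcross
  have hmaj := (hT.integrableOn_deviationMajorant hρ).mono_set hsub
  have hre : (∫ z in perforatedDisc ρ S, z * deviation ℓ S z).re =
      ∫ z in perforatedDisc ρ S, (z * deviation ℓ S z).re :=
    (Complex.reCLM.integral_comp_comm hdev).symm
  rw [hre, ← integral_const_mul, ← integral_const_mul, ← integral_add hsq hcross,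
    ← integral_add hexact hmaj]
  refine setIntegral_mono_on (integrableOn_norm_vortexField_sub_sq hρ S a)
    (hexact.add hmaj) (measurableSet_perforatedDisc ρ S) fun z hz => ?_
  rw [norm_vortexField_sub_sq ℓ a S z]
  exact add_le_add_right (hT.norm_deviation_sq_le hz) _

lemma setIntegral_norm_vortexField_sub_sq_le (hT : IsDiscTiling ℓ S) (hρ : 0 < ρ)
    (hρℓ : ρ ≤ ℓ ^ 4) (a : ℝ) :
    ∫ z in perforatedDisc ρ S, ‖vortexField S z - a * conj z‖ ^ 2 ≤
      (π / ℓ ^ 2 - a) ^ 2 * (π / 2) + 2 * |π / ℓ ^ 2 - a| * (66 * π ^ 2 + 2 * π ^ 3) +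
        (592 * π ^ 3 + 8 * π ^ 2 * Real.log (1 / ρ) + 512 * π ^ 3 * Real.log (2 / ℓ)) / ℓ ^ 2 := by
  have hℓ := hT.side_pos
  have hρ1 : ρ ≤ 1 := hρℓ.trans (pow_le_one₀ hℓ.le (by linarith [hT.side_lt]))
  have hsub : perforatedDisc ρ S ⊆ ball 0 1 := perforatedDisc_subset_ball
  have hsq : ∫ z in perforatedDisc ρ S, ‖z‖ ^ 2 ≤ π / 2 := by
    calc ∫ z in perforatedDisc ρ S, ‖z‖ ^ 2 ≤ ∫ z : ℂ in ball 0 1, ‖z‖ ^ 2 :=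
          setIntegral_mono_set (integrableOn_ball_norm_sq 1)
            (Eventually.of_forall fun _ => sq_nonneg _) hsub.eventuallyLE
      _ = π / 2 := by rw [setIntegral_ball_norm_sq zero_le_one, one_pow, mul_one]
  have hcross : 2 * (π / ℓ ^ 2 - a) * (∫ z in perforatedDisc ρ S, z * deviation ℓ S z).re ≤
      2 * |π / ℓ ^ 2 - a| * (66 * π ^ 2 + 2 * π ^ 3) := by
    refine (le_abs_self _).trans ?_
    rw [abs_mul, abs_mul, abs_two]
    gcongr
    exact (Complex.abs_re_le_norm _).trans
      (hT.norm_setIntegral_perforatedDisc_mul_deviation_le hρ hρℓ)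
  have hmaj : ∫ z in perforatedDisc ρ S, deviationMajorant ℓ ρ S z ≤
      (592 * π ^ 3 + 8 * π ^ 2 * Real.log (1 / ρ) + 512 * π ^ 3 * Real.log (2 / ℓ)) / ℓ ^ 2 :=
    (setIntegral_mono_set (hT.integrableOn_deviationMajorant hρ)
      (Eventually.of_forall fun _ => deviationMajorant_nonneg) hsub.eventuallyLE).trans
        (hT.setIntegral_deviationMajorant_le hρ hρ1)
  refine (hT.setIntegral_norm_vortexField_sub_sq_le_add hρ a).trans ?_
  gcongr

end IsDiscTiling

end Energy

section Phase

/-- The product of the unit vortices centered at the points of `S`, as a function on `ℂ`. -/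
def phase (S : Finset ℂ) (z : ℂ) : ℂ := ∏ p ∈ S, (z - p) / (‖z - p‖ : ℂ)

/-- The real derivative of a unimodular function with value `g` whose phase is, locally, the
imaginary part of a holomorphic function with derivative `F`. -/
def phaseFDeriv (g F : ℂ) : ℂ →L[ℝ] ℂ :=
  (g * I) • Complex.ofRealCLM.comp (Complex.imCLM.comp (F • ContinuousLinearMap.id ℝ ℂ))

variable {S : Finset ℂ} {z : ℂ}

lemma phaseFDeriv_apply (g F v : ℂ) : phaseFDeriv g F v = g * I * ((F * v).im : ℂ) := rfl

lemma exp_log_im_mul_I (hz : z ≠ 0) : Complex.exp ((Complex.log z).im * I) = z / (‖z‖ : ℂ) := by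
  rw [Complex.log_im, eq_div_iff (Complex.ofReal_ne_zero.2 (norm_ne_zero_iff.2 hz)), mul_comm]
  exact Complex.norm_mul_exp_arg_mul_I z

-- Dividing by `z` moves the base point to `1`, away from the branch cut of the logarithm.
lemma hasFDerivAt_div_norm (hz : z ≠ 0) :
    HasFDerivAt (fun y : ℂ => y / (‖y‖ : ℂ)) (phaseFDeriv (z / (‖z‖ : ℂ)) z⁻¹) z := by
  have hlog : HasDerivAt (fun y => Complex.log (z⁻¹ * y)) z⁻¹ z := by
    have hone : z⁻¹ * z = 1 := inv_mul_cancel₀ hz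
    simpa only [mul_one, hone, div_one] using
      ((hasDerivAt_id' z).const_mul z⁻¹).clog (hone ▸ Complex.one_mem_slitPlane)
  have him := Complex.ofRealCLM.hasFDerivAt.comp z
    (Complex.imCLM.hasFDerivAt.comp z (hlog.hasFDerivAt.restrictScalars ℝ))
  have hexp := ((him.mul_const I).cexp).const_mul (z / (‖z‖ : ℂ))
  refine (hexp.congr_of_eventuallyEq ?_).congr_fderiv ?_
  · filter_upwards [isOpen_ne.mem_nhds hz] with y hy
    have hz' : (‖z‖ : ℂ) ≠ 0 := Complex.ofReal_ne_zero.2 (norm_ne_zero_iff.2 hz)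
    have hw := exp_log_im_mul_I (mul_ne_zero (inv_ne_zero hz) hy)
    refine Eq.trans ?_ (congrArg (z / (‖z‖ : ℂ) * ·) hw.symm)
    rw [norm_mul, norm_inv]
    push_cast
    field_simp
  · have hbase : Complex.exp ((Complex.log (z⁻¹ * z)).im * I) = 1 := by
      rw [inv_mul_cancel₀ hz, Complex.log_one, Complex.zero_im, Complex.ofReal_zero, zero_mul,
        Complex.exp_zero]
    ext v
    change z / (‖z‖ : ℂ) * (Complex.exp ((Complex.log (z⁻¹ * z)).im * I) *
      (I * ((v * z⁻¹).im : ℂ))) = z / (‖z‖ : ℂ) * I * ((z⁻¹ * v).im : ℂ)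
    rw [hbase, one_mul, ← mul_assoc, mul_comm v]

lemma hasFDerivAt_phase (hz : z ∉ S) :
    HasFDerivAt (phase S) (phaseFDeriv (phase S z) (vortexField S z)) z := by
  classical
  induction S using Finset.induction_on with
  | empty =>
    refine (hasFDerivAt_const (1 : ℂ) z).congr_fderiv ?_
    ext v
    simp [phaseFDeriv_apply, vortexField]
  | insert p S hp ih =>
    obtain ⟨hzp, hzS⟩ := not_or.1 (Finset.mem_insert.not.1 hz)
    have hfactor : HasFDerivAt (fun y => (y - p) / (‖y - p‖ : ℂ)) _ z :=
      (hasFDerivAt_comp_sub p).2 (hasFDerivAt_div_norm (sub_ne_zero.2 hzp))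
    have hprod : phase (insert p S) = fun y => (y - p) / (‖y - p‖ : ℂ) * phase S y :=
      funext fun y => Finset.prod_insert hp
    rw [hprod]
    refine (hfactor.mul (ih hzS)).congr_fderiv ?_
    ext v
    simp only [vortexField, Finset.sum_insert hp, phaseFDeriv_apply, add_apply, smul_apply,
      smul_eq_mul, add_mul, Complex.add_im]
    push_cast
    ring

lemma norm_phase (hz : z ∉ S) : ‖phase S z‖ = 1 := by
  rw [phase, norm_prod]
  refine Finset.prod_eq_one fun p hp => ?_
  have hzp : z - p ≠ 0 := sub_ne_zero.2 fun h => hz (h ▸ hp)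
  rw [norm_div, Complex.norm_real, norm_norm, div_self (norm_ne_zero_iff.2 hzp)]

end Phase

section Plane

variable {S : Finset ℂ}

/-- The identification `toC` of the plane with `ℂ` as a linear isometry. -/
def planeIso : Pt ≃ₗᵢ[ℝ] ℂ := Complex.orthonormalBasisOneI.repr.symm

lemma coe_planeIso : ⇑planeIso = toC :=
  funext fun x => Complex.orthonormalBasisOneI_repr_symm_apply x

lemma toC_re (x : Pt) : (toC x).re = x 0 := by simp [toC]

lemma toC_im (x : Pt) : (toC x).im = x 1 := by simp [toC]

lemma norm_toC (x : Pt) : ‖toC x‖ = ‖x‖ := by rw [← coe_planeIso, planeIso.norm_map]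

lemma norm_toC_sub (x y : Pt) : ‖toC x - toC y‖ = ‖x - y‖ := by
  rw [← coe_planeIso, ← map_sub, planeIso.norm_map]

lemma toC_injective : Function.Injective toC := coe_planeIso ▸ planeIso.injective

lemma hasFDerivAt_comp_toC {f : ℂ → ℂ} {L : ℂ →L[ℝ] ℂ} {x : Pt} (hf : HasFDerivAt f L (toC x)) :
    HasFDerivAt (fun y => f (toC y))
      (L.comp (planeIso.toContinuousLinearEquiv : Pt →L[ℝ] ℂ)) x := by
  rw [← coe_planeIso] at hf ⊢
  exact hf.comp x planeIso.toContinuousLinearEquiv.hasFDerivAt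

lemma pd1_comp_toC {f : ℂ → ℂ} {L : ℂ →L[ℝ] ℂ} {x : Pt} (hf : HasFDerivAt f L (toC x)) :
    pd1 (fun y => f (toC y)) x = L 1 := by
  have hbasis : planeIso (EuclideanSpace.single 0 1) = 1 := by rw [coe_planeIso]; simp [toC]
  rw [pd1, (hasFDerivAt_comp_toC hf).fderiv, ← hbasis]
  rfl

lemma pd2_comp_toC {f : ℂ → ℂ} {L : ℂ →L[ℝ] ℂ} {x : Pt} (hf : HasFDerivAt f L (toC x)) :
    pd2 (fun y => f (toC y)) x = L I := by
  have hbasis : planeIso (EuclideanSpace.single 1 1) = I := by rw [coe_planeIso]; simp [toC]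
  rw [pd2, (hasFDerivAt_comp_toC hf).fderiv, ← hbasis]
  rfl

lemma covDensity_phase (ε Ω₀ : ℝ) {x : Pt} (hx : toC x ∉ S) :
    covDensity ε Ω₀ (fun y => phase S (toC y)) x =
      ‖vortexField S (toC x) - (Ω₀ / (2 * ε) : ℝ) * conj (toC x)‖ ^ 2 := by
  have hphase := hasFDerivAt_phase hx
  have hfactor (s t : ℝ) : ‖phase S (toC x) * I * s - I * t * phase S (toC x)‖ ^ 2 =
      (s - t) ^ 2 := by
    have hfact : phase S (toC x) * I * s - I * t * phase S (toC x) =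
        phase S (toC x) * I * (s - t : ℝ) := by
      push_cast
      ring
    rw [hfact, norm_mul, norm_mul, norm_phase hx, Complex.norm_I, Complex.norm_real, one_mul,
      one_mul, Real.norm_eq_abs, sq_abs]
  rw [covDensity, pd1_comp_toC hphase, pd2_comp_toC hphase, phaseFDeriv_apply, phaseFDeriv_apply,
    hfactor, hfactor, mul_one, Complex.mul_I_im, Complex.sq_norm, Complex.normSq_apply]
  simp only [Complex.sub_re, Complex.sub_im, Complex.mul_re,
    Complex.mul_im, Complex.conj_re, Complex.conj_im, Complex.ofReal_re, Complex.ofReal_im,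
    toC_re, toC_im]
  ring

end Plane

section Lattice

variable {ℓ ρ : ℝ} {p w : ℂ}

lemma finite_int_multiples_abs_le (hℓ : 0 < ℓ) (R : ℝ) :
    {x : ℝ | (∃ m : ℤ, x = m * ℓ) ∧ |x| ≤ R}.Finite := by
  refine ((Set.finite_Icc ⌈-(R / ℓ)⌉ ⌊R / ℓ⌋).image fun m : ℤ => m * ℓ).subset ?_
  rintro _ ⟨⟨m, rfl⟩, hm⟩
  obtain ⟨hlower, hupper⟩ := abs_le.1 hm
  refine ⟨m, ⟨Int.ceil_le.2 ?_, Int.le_floor.2 ((le_div_iff₀ hℓ).2 hupper)⟩, rfl⟩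
  rwa [← neg_div, div_le_iff₀ hℓ]

lemma finite_image_latt (hℓ : 0 < ℓ) : (toC '' latt ℓ).Finite := by
  let L : Set ℝ := {x | (∃ m : ℤ, x = m * ℓ) ∧ |x| ≤ 1}
  have hL : L.Finite := finite_int_multiples_abs_le hℓ 1
  refine ((hL.prod hL).preimage Complex.equivRealProd.injective.injOn).subset ?_
  rintro _ ⟨x, ⟨⟨m, hm⟩, ⟨n, hn⟩, hx⟩, rfl⟩
  have hx1 : ‖toC x‖ ≤ 1 := by
    have : 0 ≤ 2 * √2 * ℓ := by positivity
    rw [norm_toC]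
    linarith
  exact ⟨⟨⟨m, (toC_re x).trans hm⟩, (Complex.abs_re_le_norm _).trans hx1⟩,
    ⟨n, (toC_im x).trans hn⟩, (Complex.abs_im_le_norm _).trans hx1⟩

/-- The truncated square lattice `latt ℓ` as a finite set of complex numbers. -/
def latticeVortices (hℓ : 0 < ℓ) : Finset ℂ := (finite_image_latt hℓ).toFinset

lemma mem_latticeVortices_iff (hℓ : 0 < ℓ) : p ∈ latticeVortices hℓ ↔
    (∃ m : ℤ, p.re = m * ℓ) ∧ (∃ n : ℤ, p.im = n * ℓ) ∧ ‖p‖ ≤ 1 - 2 * √2 * ℓ := by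
  obtain ⟨x, rfl⟩ : ∃ x, toC x = p := coe_planeIso ▸ planeIso.surjective p
  rw [latticeVortices, Set.Finite.mem_toFinset, toC_injective.mem_set_image, toC_re, toC_im,
    norm_toC]
  rfl

lemma mem_Ico_iff_round_eq (hℓ : 0 < ℓ) (x : ℝ) (m : ℤ) :
    x ∈ Ico (m * ℓ - ℓ / 2) (m * ℓ + ℓ / 2) ↔ round (x / ℓ) = m := by
  rw [round_eq_iff, Set.mem_Ico, Set.mem_Ico, le_div_iff₀ hℓ, div_lt_iff₀ hℓ, sub_mul, add_mul,
    one_div_mul_eq_div]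

lemma mem_cell_iff_round_eq (hℓ : 0 < ℓ) {m n : ℤ} (hm : p.re = m * ℓ) (hn : p.im = n * ℓ) :
    w ∈ cell ℓ p ↔ round (w.re / ℓ) = m ∧ round (w.im / ℓ) = n := by
  rw [cell, Complex.mem_reProdIm, hm, hn, mem_Ico_iff_round_eq hℓ, mem_Ico_iff_round_eq hℓ]

lemma isDiscTiling_latticeVortices (hℓ : 0 < ℓ) (hℓ1 : 4 * ℓ < 1) :
    IsDiscTiling ℓ (latticeVortices hℓ) where
  side_pos := hℓ
  side_lt := hℓ1
  pairwiseDisjoint_cell p hp q hq hpq := by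
    obtain ⟨⟨m, hm⟩, ⟨n, hn⟩, -⟩ := (mem_latticeVortices_iff hℓ).1 hp
    obtain ⟨⟨m', hm'⟩, ⟨n', hn'⟩, -⟩ := (mem_latticeVortices_iff hℓ).1 hq
    refine Set.disjoint_left.2 fun w hwp hwq => hpq ?_
    obtain ⟨hre, him⟩ := (mem_cell_iff_round_eq hℓ hm hn).1 hwp
    obtain ⟨hre', him'⟩ := (mem_cell_iff_round_eq hℓ hm' hn').1 hwq
    apply Complex.ext
    · rw [hm, hm', ← hre, ← hre']
    · rw [hn, hn', ← him, ← him']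
  cell_subset_ball_one p hp w hw := by
    have hp1 := ((mem_latticeVortices_iff hℓ).1 hp).2.2
    have hsqrt : (1 : ℝ) ≤ √2 := Real.one_le_sqrt.2 one_le_two
    rw [mem_ball_zero_iff]
    nlinarith [norm_le_norm_add_norm_sub' w p, norm_sub_lt_of_mem_cell hℓ hw]
  ball_subset_biUnion_cell w hw := by
    let p : ℂ := ⟨round (w.re / ℓ) * ℓ, round (w.im / ℓ) * ℓ⟩
    have hwp : w ∈ cell ℓ p := (mem_cell_iff_round_eq hℓ rfl rfl).2 ⟨rfl, rfl⟩
    have hsqrt : 2 * √2 ≤ 3 := by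
      nlinarith [Real.sq_sqrt (zero_le_two (α := ℝ)), Real.sqrt_nonneg 2]
    have hp : ‖p‖ ≤ 1 - 2 * √2 * ℓ := by
      nlinarith [mem_ball_zero_iff.1 hw, norm_sub_lt_of_mem_cell hℓ hwp,
        norm_le_norm_add_norm_sub w p]
    exact Set.mem_biUnion ((mem_latticeVortices_iff hℓ).2 ⟨⟨_, rfl⟩, ⟨_, rfl⟩, hp⟩) hwp

lemma gfun_eq_phase_comp_toC (hℓ : 0 < ℓ) :
    gfun ℓ = fun x => phase (latticeVortices hℓ) (toC x) := by
  funext x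
  rw [phase, latticeVortices, ← finprod_mem_eq_finite_toFinset_prod,
    finprod_mem_image toC_injective.injOn, gfun]
  simp_rw [norm_toC_sub]

lemma lambdaSet_eq_preimage_perforatedDisc (hℓ : 0 < ℓ) (ρ : ℝ) :
    lambdaSet ℓ ρ = planeIso ⁻¹' perforatedDisc ρ (latticeVortices hℓ) := by
  have hball (p : Pt) (r : ℝ) : planeIso ⁻¹' ball (planeIso p) r = ball p r := by
    rw [planeIso.preimage_ball, planeIso.symm_apply_apply]
  have hcores : ⋃ p ∈ latticeVortices hℓ, ball p ρ = ⋃ p ∈ latt ℓ, ball (planeIso p) ρ := by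
    simp only [latticeVortices, Set.Finite.mem_toFinset, Set.biUnion_image, coe_planeIso]
  rw [perforatedDisc, hcores, Set.preimage_sdiff, Set.preimage_iUnion₂, ← map_zero planeIso]
  simp only [hball]
  rfl

lemma setIntegral_covDensity_gfun (hℓ : 0 < ℓ) (hρ : 0 < ρ) (ε Ω₀ : ℝ) :
    ∫ x in lambdaSet ℓ ρ, covDensity ε Ω₀ (gfun ℓ) x =
      ∫ z in perforatedDisc ρ (latticeVortices hℓ),
        ‖vortexField (latticeVortices hℓ) z - (Ω₀ / (2 * ε) : ℝ) * conj z‖ ^ 2 := by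
  rw [← planeIso.measurePreserving.setIntegral_preimage_emb
    planeIso.toHomeomorph.measurableEmbedding, ← lambdaSet_eq_preimage_perforatedDisc,
    gfun_eq_phase_comp_toC hℓ]
  have hmeas : MeasurableSet (lambdaSet ℓ ρ) := by
    rw [lambdaSet_eq_preimage_perforatedDisc hℓ]
    exact planeIso.continuous.measurable (measurableSet_perforatedDisc _ _)
  refine setIntegral_congr_fun hmeas fun x hx => ?_
  rw [lambdaSet_eq_preimage_perforatedDisc hℓ, Set.mem_preimage, coe_planeIso] at hx
  have hxS : toC x ∉ latticeVortices hℓ := fun h => by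
    have := le_norm_sub_of_mem_perforatedDisc hx h
    rw [sub_self, norm_zero] at this
    exact this.not_gt hρ
  rw [coe_planeIso]
  exact covDensity_phase ε Ω₀ hxS

end Lattice

section Asymptotics

variable {Ω₀ δ ε η : ℝ}

lemma one_le_abs_log (hε : 0 < ε) (hε1 : ε < Real.exp (-1)) : 1 ≤ |Real.log ε| := by
  have hlog := (Real.log_lt_iff_lt_exp hε).2 hε1
  rw [abs_of_neg (by linarith)]
  linarith

lemma log_one_div_rpow (hε : 0 < ε) (hε1 : ε < 1) (η : ℝ) :
    Real.log (1 / ε ^ η) = η * |Real.log ε| := by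
  rw [one_div, Real.log_inv, Real.log_rpow hε, abs_of_neg (Real.log_neg hε hε1), mul_neg]

lemma log_two_div_mul_sqrt_le (hδ : 0 < δ) (hε : 0 < ε) (hlog : 1 ≤ |Real.log ε|) :
    Real.log (2 / (δ * √ε)) ≤ (|Real.log (2 / δ)| + 1) * |Real.log ε| := by
  have hsplit : Real.log (2 / (δ * √ε)) = Real.log (2 / δ) - Real.log ε / 2 := by
    rw [← div_div, Real.log_div (by positivity) (by positivity), Real.log_sqrt hε.le]
  rw [hsplit]
  nlinarith [le_abs_self (Real.log (2 / δ)), abs_nonneg (Real.log (2 / δ)),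
    neg_abs_le (Real.log ε)]

/-- The constant in the `|log ε| / ε` error term for vortex cores of radius `ε ^ η`. -/
def energyConstant (Ω₀ δ η : ℝ) : ℝ :=
  2 * |π / δ ^ 2 - Ω₀ / 2| * (66 * π ^ 2 + 2 * π ^ 3) +
    (592 * π ^ 3 + 8 * π ^ 2 * η + 512 * π ^ 3 * (|Real.log (2 / δ)| + 1)) / δ ^ 2

lemma energy_bound_le (hδ : 0 < δ) (hε : 0 < ε) (hε1 : ε < Real.exp (-1)) (Ω₀ η : ℝ) :
    (π / (δ * √ε) ^ 2 - Ω₀ / (2 * ε)) ^ 2 * (π / 2) +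
        2 * |π / (δ * √ε) ^ 2 - Ω₀ / (2 * ε)| * (66 * π ^ 2 + 2 * π ^ 3) +
        (592 * π ^ 3 + 8 * π ^ 2 * Real.log (1 / ε ^ η) +
          512 * π ^ 3 * Real.log (2 / (δ * √ε))) / (δ * √ε) ^ 2 ≤
      π / (2 * ε ^ 2) * (Ω₀ / 2 - π / δ ^ 2) ^ 2 +
        energyConstant Ω₀ δ η * |Real.log ε| / ε := by
  have hlog := one_le_abs_log hε hε1
  have hlogρ := log_one_div_rpow hε (hε1.trans (Real.exp_lt_one_iff.2 neg_one_lt_zero)) η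
  have hlogℓ := log_two_div_mul_sqrt_le hδ hε hlog
  have hcoeff : π / (δ ^ 2 * ε) - Ω₀ / (2 * ε) = (π / δ ^ 2 - Ω₀ / 2) / ε := by field_simp
  rw [mul_pow, Real.sq_sqrt hε.le, hlogρ, hcoeff, abs_div, abs_of_pos hε]
  set l := |Real.log ε|
  have hcross : 66 * π ^ 2 + 2 * π ^ 3 ≤ (66 * π ^ 2 + 2 * π ^ 3) * l :=
    le_mul_of_one_le_right (by positivity) hlog
  have hconst : 592 * π ^ 3 ≤ 592 * π ^ 3 * l := le_mul_of_one_le_right (by positivity) hlog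
  calc ((π / δ ^ 2 - Ω₀ / 2) / ε) ^ 2 * (π / 2) +
        2 * (|π / δ ^ 2 - Ω₀ / 2| / ε) * (66 * π ^ 2 + 2 * π ^ 3) +
        (592 * π ^ 3 + 8 * π ^ 2 * (η * l) + 512 * π ^ 3 * Real.log (2 / (δ * √ε))) /
          (δ ^ 2 * ε)
      ≤ ((π / δ ^ 2 - Ω₀ / 2) / ε) ^ 2 * (π / 2) +
        2 * (|π / δ ^ 2 - Ω₀ / 2| / ε) * ((66 * π ^ 2 + 2 * π ^ 3) * l) +
        (592 * π ^ 3 * l + 8 * π ^ 2 * (η * l) +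
          512 * π ^ 3 * ((|Real.log (2 / δ)| + 1) * l)) / (δ ^ 2 * ε) := by
        gcongr
    _ = π / (2 * ε ^ 2) * (Ω₀ / 2 - π / δ ^ 2) ^ 2 + energyConstant Ω₀ δ η * l / ε := by
        unfold energyConstant
        field_simp
        ring

lemma rpow_le_mul_sqrt_pow_four (hε : 0 < ε) (hε1 : ε ≤ 1) (hεδ : ε ≤ δ ^ 4) (hη : 3 ≤ η) :
    ε ^ η ≤ (δ * √ε) ^ 4 := by
  calc ε ^ η ≤ ε ^ (3 : ℝ) := Real.rpow_le_rpow_of_exponent_ge hε hε1 hη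
    _ = ε * ε ^ 2 := by rw [Real.rpow_ofNat]; ring
    _ ≤ δ ^ 4 * ε ^ 2 := by gcongr
    _ = (δ * √ε) ^ 4 := by rw [mul_pow, pow_mul √ε 2 2, Real.sq_sqrt hε.le]

lemma four_mul_mul_sqrt_lt_one (hδ : 0 < δ) (hε : 0 < ε) (hεδ : ε < 1 / (16 * δ ^ 2)) :
    4 * (δ * √ε) < 1 := by
  rw [lt_div_iff₀ (by positivity)] at hεδ
  refine lt_of_pow_lt_pow_left₀ 2 zero_le_one ?_
  rw [mul_pow, mul_pow, Real.sq_sqrt hε.le]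
  linarith

end Asymptotics

theorem stmt13_general (Ω₀ δ η : ℝ) (hδ : 0 < δ) :
    ∃ (C ε₀ : ℝ), 0 < ε₀ ∧ ∀ ε : ℝ, 0 < ε → ε < ε₀ →
      (∫ x in lambdaSet (δ * Real.sqrt ε) (ε ^ η),
        covDensity ε Ω₀ (gfun (δ * Real.sqrt ε)) x) ≤
      π / (2 * ε ^ 2) * (Ω₀ / 2 - π / δ ^ 2) ^ 2 + C * |Real.log ε| / ε := by
  refine ⟨energyConstant Ω₀ δ (max η 3),
    min (Real.exp (-1)) (min (δ ^ 4) (1 / (16 * δ ^ 2))), by positivity, fun ε hε hlt => ?_⟩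
  obtain ⟨hε_exp, hε_min⟩ := lt_min_iff.1 hlt
  obtain ⟨hεδ, hεδ'⟩ := lt_min_iff.1 hε_min
  have hε1 : ε ≤ 1 := (hε_exp.trans (Real.exp_lt_one_iff.2 neg_one_lt_zero)).le
  have hℓ : 0 < δ * √ε := mul_pos hδ (Real.sqrt_pos.2 hε)
  have hρ (s : ℝ) : 0 < ε ^ s := Real.rpow_pos_of_pos hε s
  have hT := isDiscTiling_latticeVortices hℓ (four_mul_mul_sqrt_lt_one hδ hε hεδ')
  calc ∫ x in lambdaSet (δ * √ε) (ε ^ η), covDensity ε Ω₀ (gfun (δ * √ε)) x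
      = ∫ z in perforatedDisc (ε ^ η) (latticeVortices hℓ),
          ‖vortexField (latticeVortices hℓ) z - (Ω₀ / (2 * ε) : ℝ) * conj z‖ ^ 2 :=
        setIntegral_covDensity_gfun hℓ (hρ η) ε Ω₀
    _ ≤ ∫ z in perforatedDisc (ε ^ max η 3) (latticeVortices hℓ),
          ‖vortexField (latticeVortices hℓ) z - (Ω₀ / (2 * ε) : ℝ) * conj z‖ ^ 2 :=
        setIntegral_norm_vortexField_sub_sq_anti (hρ _)
          (Real.rpow_le_rpow_of_exponent_ge hε hε1 (le_max_left η 3)) _ _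
    _ ≤ _ := hT.setIntegral_norm_vortexField_sub_sq_le (hρ _)
        (rpow_le_mul_sqrt_pow_four hε hε1 hεδ.le (le_max_right η 3)) _
    _ ≤ _ := energy_bound_le hδ hε hε_exp Ω₀ _

theorem stmt13 (Ω₀ δ η : ℝ) (hΩ : 0 < Ω₀) (hδ : 0 < δ) (hη : 5 / 2 < η) :
    ∃ (C ε₀ : ℝ), 0 < ε₀ ∧ ∀ ε : ℝ, 0 < ε → ε < ε₀ →
      (∫ x in lambdaSet (δ * Real.sqrt ε) (ε ^ η),
        covDensity ε Ω₀ (gfun (δ * Real.sqrt ε)) x) ≤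
      π / (2 * ε ^ 2) * (Ω₀ / 2 - π / δ ^ 2) ^ 2 + C * |Real.log ε| / ε :=
  stmt13_general Ω₀ δ η hδ
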